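/- Let s ≥ 2 and let G = P'_{8·3^s} be the generalized binary tetrahedral group. There exists an exact sequence of ℤ[G]-modules ⋯ → F₂ → F₁ → F₀ → ℤ → 0 (a free resolution of the trivial module ℤ over ℤ[G]) in which each F_h is a finitely generated free ℤ[G]-module whose rank is 1 when h ≡ 0 or 3 (mod 4) and 2 when h ≡ 1 or 2 (mod 4). Since G contains a subgroup isomorphic to Q₈, these ranks are minimal: no free resolution of ℤ over ℤ[G] has a smaller rank in any degree. -/

import Mathlib

/-- Generators of the generalized binary tetrahedral group. -/
inductive Gen : Type
  | p : Gen
  | q : Gen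
  | z : Gen

/-- The relations of the presentation
`⟨p, q, z | p² = (pq)² = q², z p z⁻¹ = q, z q z⁻¹ = pq, z^{3^s} = 1⟩`. -/
def rels (s : ℕ) : Set (FreeGroup Gen) :=
  {FreeGroup.of Gen.p ^ 2 * (FreeGroup.of Gen.q ^ 2)⁻¹,
   (FreeGroup.of Gen.p * FreeGroup.of Gen.q) ^ 2 * (FreeGroup.of Gen.q ^ 2)⁻¹,
   FreeGroup.of Gen.z * FreeGroup.of Gen.p * (FreeGroup.of Gen.z)⁻¹ *
     (FreeGroup.of Gen.q)⁻¹,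
   FreeGroup.of Gen.z * FreeGroup.of Gen.q * (FreeGroup.of Gen.z)⁻¹ *
     (FreeGroup.of Gen.p * FreeGroup.of Gen.q)⁻¹,
   FreeGroup.of Gen.z ^ (3 ^ s)}

/-- The minimal ranks: `1` in degrees `≡ 0, 3 (mod 4)` and `2` in degrees `≡ 1, 2 (mod 4)`. -/
def minRank (h : ℕ) : ℕ := if h % 4 = 0 ∨ h % 4 = 3 then 1 else 2


namespace Stmt19

section grp
variable {Γ : Type*} [Group Γ]

/-- `n = p²` is central in `⟨p,q⟩` and has square one. -/
lemma quat_basic {p q : Γ} (h1 : p ^ 2 = q ^ 2) (h2 : (p * q) ^ 2 = q ^ 2) :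
    p * q * p = q ∧ q * p * q = p ∧ (p ^ 2) ^ 2 = 1 := by
  have a1 : p * q * p = q := by
    have : p * q * p * q = q * q := by
      calc p * q * p * q = (p * q) ^ 2 := by simp [pow_succ, mul_assoc]
        _ = q * q := by rw [h2, sq]
    exact mul_right_cancel this
  have a2 : q * p * q = p := by
    have : p * (q * p * q) = p * p := by
      calc p * (q * p * q) = (p * q) ^ 2 := by simp [pow_succ, mul_assoc]
        _ = p * p := by rw [h2, ← h1, sq]
    exact mul_left_cancel this
  refine ⟨a1, a2, ?_⟩
  have b1 : q * p = p⁻¹ * q := by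
    nth_rewrite 2 [← a1]; group
  have b2 : q * p ^ 2 = (p⁻¹) ^ 2 * q := by
    rw [sq, ← mul_assoc, b1, mul_assoc, b1, sq, mul_assoc]
  have b3 : q * p ^ 2 = p ^ 2 * q := by rw [h1]; group
  have b4 : (p⁻¹) ^ 2 = p ^ 2 := mul_right_cancel (b2.symm.trans b3)
  calc (p ^ 2) ^ 2 = p ^ 2 * p ^ 2 := sq _
    _ = (p⁻¹) ^ 2 * p ^ 2 := by rw [b4]
    _ = 1 := by group

/-- The five relations follow from the two relator presentation. -/
lemma rels_of_uv (k : ℕ) {U V : Γ} (h1 : U ^ 3 * V ^ 3 = 1)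
    (h2 : V * U ^ (3 * k + 1) * V * U ^ (3 * k + 4) = 1) :
    ∃ P Q Z : Γ, P ^ 2 = Q ^ 2 ∧ (P * Q) ^ 2 = Q ^ 2 ∧ Z * P * Z⁻¹ = Q ∧
      Z * Q * Z⁻¹ = P * Q ∧ Z ^ (9 * (2 * k + 1)) = 1 ∧ P ^ 2 * Z = U ∧
      P⁻¹ * Z ^ (2 * (3 * k + 1)) = V := by
  obtain ⟨H, hH⟩ : ∃ H, H = U ^ 3 := ⟨_, rfl⟩
  have hV : V ^ 3 = H⁻¹ := by rw [hH]; exact (inv_eq_of_mul_eq_one_right h1).symm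
  have cHU : Commute H U := by rw [hH]; exact (Commute.refl U).pow_left 3
  have cHV : Commute H V := by
    have : Commute H⁻¹ V := by rw [← hV]; exact (Commute.refl V).pow_left 3
    simpa using this
  obtain ⟨E, hE⟩ : ∃ E, E = H ^ (2 * k + 1) := ⟨_, rfl⟩
  have cEU : Commute E U := by rw [hE]; exact cHU.pow_left _
  have cEV : Commute E V := by rw [hE]; exact cHV.pow_left _
  have e1 : E * (V * U * V * U) = 1 := by
    have x1 : U ^ (3 * k + 1) = H ^ k * U := by rw [hH, ← pow_mul, pow_succ]
    have x2 : U ^ (3 * k + 4) = U * H ^ (k + 1) := by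
      rw [hH, ← pow_mul, ← pow_succ']; ring_nf
    rw [x1, x2] at h2
    have c1 : Commute (H ^ k) (V * U * V * U) :=
      (((cHV.mul_right cHU).mul_right cHV).mul_right cHU).pow_left k
    have c2 : Commute (H ^ (k+1)) (V * U * V * U) :=
      (((cHV.mul_right cHU).mul_right cHV).mul_right cHU).pow_left _
    have c3 : Commute (H ^ k) V := cHV.pow_left k
    calc E * (V * U * V * U) = H ^ k * H ^ (k+1) * (V * U * V * U) := by
          rw [hE, ← pow_add]; congr 2; ring
      _ = H ^ k * (V * U * V * U) * H ^ (k+1) := by rw [mul_assoc (H ^ k), c2.eq, ← mul_assoc (H ^ k)]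
      _ = (H ^ k * V) * U * V * U * H ^ (k+1) := by simp only [mul_assoc]
      _ = V * (H ^ k * U) * V * (U * H ^ (k+1)) := by rw [c3.eq]; simp only [mul_assoc]
      _ = 1 := h2
  have cEVU : Commute E (V * U) := cEV.mul_right cEU
  have e2 : E * (V * U) = (V * U)⁻¹ := by
    rw [eq_inv_iff_mul_eq_one, ← e1]; simp only [mul_assoc]
  have e3 : (V * U) ^ 2 = E⁻¹ := by
    rw [eq_comm, inv_eq_iff_mul_eq_one, ← e1, sq]; simp only [mul_assoc]
  have P2 : (E ^ 2 * (V * U)) ^ 2 = E ^ 3 := by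
    rw [(cEVU.pow_left 2).mul_pow, e3]; group
  have Q2 : (U * (E ^ 2 * (V * U)) * U⁻¹) ^ 2 = E ^ 3 := by
    rw [conj_pow, P2, ← (cEU.pow_left 3).eq]; group
  have PQ : (U * (U * (E ^ 2 * (V * U)) * U⁻¹) * U⁻¹) =
      (E ^ 2 * (V * U)) * (U * (E ^ 2 * (V * U)) * U⁻¹) := by
    have c2U := cEU.pow_left 2
    have y1 : E * V * U = U ^ 2 * V ^ 2 := by
      have z1 : U ^ 2 = H * U⁻¹ := by rw [hH]; group
      have z2 : V ^ 2 = V⁻¹ * H⁻¹ := by rw [← hV]; group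
      rw [mul_assoc, e2, z1, z2]
      calc (V * U)⁻¹ = H * H⁻¹ * (U⁻¹ * V⁻¹) := by group
        _ = H * (H⁻¹ * (U⁻¹ * V⁻¹)) := by group
        _ = H * ((U⁻¹ * V⁻¹) * H⁻¹) := by
            rw [((cHU.inv_right.mul_right cHV.inv_right).inv_left).eq]
        _ = _ := by group
    have y3 : U * V * U = E⁻¹ * V⁻¹ := by
      have := e1
      rw [cEV.mul_right cEU |>.mul_right cEV |>.mul_right cEU |>.eq] at this
      have : V * (U * V * U) * E = 1 := by rw [← this]; simp only [mul_assoc]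
      have w : V * (U * V * U) = E⁻¹ := eq_inv_of_mul_eq_one_left this
      rw [cEV.inv_inv.eq, ← w]; group
    have y2 : E ^ 2 * V * U ^ 2 * V * U = U ^ 2 * V := by
      calc E ^ 2 * V * U ^ 2 * V * U = E ^ 2 * (V * U) * (U * V * U) := by
            simp only [sq, mul_assoc]
        _ = E ^ 2 * ((V * U) * E⁻¹) * V⁻¹ := by rw [y3]; simp only [mul_assoc]
        _ = E ^ 2 * (E⁻¹ * (V * U)) * V⁻¹ := by rw [cEVU.inv_left.eq]
        _ = E * V * U * V⁻¹ := by group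
        _ = U ^ 2 * V := by rw [y1]; group
    calc (U * (U * (E ^ 2 * (V * U)) * U⁻¹) * U⁻¹)
        = U * (U * E ^ 2) * V * U⁻¹ := by group
      _ = (E ^ 2 * U ^ 2) * V * U⁻¹ := by
          rw [← c2U.eq, ← mul_assoc, ← c2U.eq]; simp [sq, mul_assoc]
      _ = E ^ 2 * (U ^ 2 * V) * U⁻¹ := by group
      _ = E ^ 2 * (E ^ 2 * V * U ^ 2 * V * U) * U⁻¹ := by rw [y2]
      _ = E ^ 2 * (E ^ 2 * (V * U)) * (U * V * U * U⁻¹) := by simp [sq, mul_assoc]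
      _ = E ^ 2 * ((V * U) * E ^ 2) * (U * V * U * U⁻¹) := by rw [(cEVU.pow_left 2).eq]
      _ = (E ^ 2 * (V * U)) * ((E ^ 2 * U) * (V * U) * U⁻¹) := by simp [mul_assoc]
      _ = _ := by rw [c2U.eq]; group
  have R2 : ((E ^ 2 * (V * U)) * (U * (E ^ 2 * (V * U)) * U⁻¹)) ^ 2 = E ^ 3 := by
    rw [← PQ, conj_pow, Q2, ← (cEU.pow_left 3).eq]; group
  have n2 : (E ^ 3) ^ 2 = 1 := by
    have := (quat_basic (P2.trans Q2.symm) (R2.trans Q2.symm)).2.2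
    rwa [P2] at this
  have c3 : Commute (E ^ 3) U := cEU.pow_left 3
  refine ⟨E ^ 2 * (V * U), U * (E ^ 2 * (V * U)) * U⁻¹, E ^ 3 * U, P2.trans Q2.symm,
    R2.trans Q2.symm, ?_, ?_, ?_, ?_, ?_⟩
  · have : Commute (E ^ 3) (U * (E ^ 2 * (V * U)) * U⁻¹) :=
      (((c3.mul_right (((Commute.refl E).pow_pow 3 2).mul_right
        (cEVU.pow_left 3))).mul_right c3.inv_right))
    calc E ^ 3 * U * (E ^ 2 * (V * U)) * (E ^ 3 * U)⁻¹
        = E ^ 3 * (U * (E ^ 2 * (V * U)) * U⁻¹) * (E ^ 3)⁻¹ := by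
          rw [mul_inv_rev]; simp only [mul_assoc]
      _ = _ := by rw [this.eq]; group
  · have : Commute (E ^ 3) (U * (U * (E ^ 2 * (V * U)) * U⁻¹) * U⁻¹) :=
      (c3.mul_right (((c3.mul_right (((Commute.refl E).pow_pow 3 2).mul_right
        (cEVU.pow_left 3))).mul_right c3.inv_right))).mul_right c3.inv_right
    calc E ^ 3 * U * (U * (E ^ 2 * (V * U)) * U⁻¹) * (E ^ 3 * U)⁻¹
        = E ^ 3 * (U * (U * (E ^ 2 * (V * U)) * U⁻¹) * U⁻¹) * (E ^ 3)⁻¹ := by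
          rw [mul_inv_rev]; simp only [mul_assoc]
      _ = (U * (U * (E ^ 2 * (V * U)) * U⁻¹) * U⁻¹) := by rw [this.eq]; group
      _ = _ := PQ
  · rw [c3.mul_pow]
    have a1 : U ^ (9 * (2 * k + 1)) = E ^ 3 := by
      rw [hE, hH, ← pow_mul, ← pow_mul]; ring_nf
    have a2 : (E ^ 3) ^ (9 * (2 * k + 1)) = E ^ 3 := by
      rw [show 9 * (2 * k + 1) = 2 * (9 * k + 4) + 1 by ring, pow_succ, pow_mul, n2]; simp
    rw [a1, a2, ← sq, n2]
  · rw [P2, ← mul_assoc, ← sq, n2, one_mul]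
  · rw [c3.mul_pow]
    have a1 : U ^ (2 * (3 * k + 1)) = E ^ 2 * (V * U) * V := by
      have : U ^ (2 * (3 * k + 1)) = E * U⁻¹ := by
        rw [eq_mul_inv_iff_mul_eq, hE, hH, ← pow_mul, ← pow_succ]; ring_nf
      rw [this]
      have : E * (V * U * V * U) * U⁻¹ = U⁻¹ := by rw [e1, one_mul]
      calc E * U⁻¹ = E * (E * (V * U * V * U) * U⁻¹) := by rw [this]
        _ = _ := by simp [sq, mul_assoc]
    have a2 : (E ^ 3) ^ (2 * (3 * k + 1)) = 1 := by rw [pow_mul, n2, one_pow]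
    rw [a1, a2]; group

lemma uv_of_rels (k : ℕ) {p q z : Γ} (h1 : p ^ 2 = q ^ 2) (h2 : (p * q) ^ 2 = q ^ 2)
    (h3 : z * p * z⁻¹ = q) (h4 : z * q * z⁻¹ = p * q) (h5 : z ^ (9 * (2 * k + 1)) = 1)
    {u v : Γ} (hu : p ^ 2 * z = u) (hv : p⁻¹ * z ^ (2 * (3 * k + 1)) = v) :
    u ^ 3 * v ^ 3 = 1 ∧ v * u ^ (3 * k + 1) * v * u ^ (3 * k + 4) = 1 ∧
     z = u ^ (9 * (2 * k + 1)) * u ∧ p = z ^ (2 * (3 * k + 1)) * v⁻¹ ∧ q = z * p * z⁻¹ := by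
  obtain ⟨b1, b2, n2⟩ := quat_basic h1 h2
  have cz : Commute (p ^ 2) z := by
    have : z * p ^ 2 * z⁻¹ = p ^ 2 := by rw [← conj_pow, h3, h1]
    exact (mul_inv_eq_iff_eq_mul.mp this).symm
  have cp : Commute (p ^ 2) p := (Commute.refl p).pow_left 2
  have cz3 : Commute (z ^ 3) p := by
    have : z ^ 3 * p * (z ^ 3)⁻¹ = p := by
      calc z ^ 3 * p * (z ^ 3)⁻¹ = z * (z * (z * p * z⁻¹) * z⁻¹) * z⁻¹ := by simp [pow_succ, mul_assoc]
        _ = z * (p * q) * z⁻¹ := by rw [h3, h4]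
        _ = (z * p * z⁻¹) * (z * q * z⁻¹) := by simp [mul_assoc]
        _ = p := by rw [h3, h4, ← mul_assoc, b2]
    exact mul_inv_eq_iff_eq_mul.mp this
  have u3 : u ^ 3 = p ^ 2 * z ^ 3 := by
    rw [← hu, cz.mul_pow]
    congr 1
    calc (p ^ 2) ^ 3 = (p ^ 2) ^ 2 * p ^ 2 := by group
      _ = p ^ 2 := by rw [n2, one_mul]
  have z6 : (z ^ 3) ^ (2 * (3 * k + 1)) * z ^ 3 = 1 := by
    rw [← pow_mul, ← pow_add, ← h5]; ring_nf
  have ninv : (p ^ 2)⁻¹ = p ^ 2 := by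
    rw [inv_eq_iff_mul_eq_one, ← sq, n2]
  have w1 : z ^ (2 * (3 * k + 1)) = (z ^ 3) ^ (2 * k) * z ^ 2 := by
    rw [← pow_mul, ← pow_add]; ring_nf
  have v3 : v ^ 3 = p ^ 2 * (z ^ 3) ^ (2 * (3 * k + 1)) := by
    have c1 : Commute ((z ^ 3) ^ (2 * k)) p⁻¹ := (cz3.pow_left _).inv_right
    have c2 : Commute ((z ^ 3) ^ (2 * k)) z := ((Commute.refl z).pow_left _).pow_left _
    have : v = (z ^ 3) ^ (2 * k) * (p⁻¹ * z ^ 2) := by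
      rw [← hv, w1, ← mul_assoc, ← mul_assoc, c1.eq]
    rw [this, (c1.mul_right (c2.pow_right 2)).mul_pow]
    have key : (p⁻¹ * z ^ 2) ^ 3 = p ^ 2 * (z ^ 3) ^ 2 := by
      calc (p⁻¹ * z ^ 2) ^ 3 = p⁻¹ * (z * (z * p * z⁻¹) * z⁻¹)⁻¹ *
            (z ^ 3 * (z * p * z⁻¹) * (z ^ 3)⁻¹)⁻¹ * (z ^ 3) ^ 2 := by simp [pow_succ, mul_assoc]
        _ = p⁻¹ * (p * q)⁻¹ * q⁻¹ * (z ^ 3) ^ 2 := by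
          have : Commute (z ^ 3) q := by
            rw [← h3]
            have c : Commute (z ^ 3) z := (Commute.refl z).pow_left 3
            exact (c.mul_right cz3).mul_right c.inv_right
          rw [h3, h4, this.eq]; group
        _ = (q * p * q * p)⁻¹ * (z ^ 3) ^ 2 := by group
        _ = _ := by rw [b2, ← sq, ninv]
    have c3 : Commute (((z ^ 3) ^ (2 * k)) ^ 3) (p ^ 2) := ((cz3.pow_left _).pow_left _).pow_right _
    rw [key, ← mul_assoc, c3.eq, mul_assoc]
    congr 1
    rw [← pow_mul, ← pow_add]; ring_nf
  have cnz3 : Commute (p ^ 2) (z ^ 3) := cz.pow_right 3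
  have r1 : u ^ 3 * v ^ 3 = 1 := by
    rw [u3, v3]
    calc p ^ 2 * z ^ 3 * (p ^ 2 * (z ^ 3) ^ (2 * (3 * k + 1)))
       = p ^ 2 * (z ^ 3 * p ^ 2) * (z ^ 3) ^ (2 * (3 * k + 1)) := by simp only [mul_assoc]
     _ = (p ^ 2) ^ 2 * (z ^ 3 * (z ^ 3) ^ (2 * (3 * k + 1))) := by
        rw [← cnz3.eq]; simp only [sq, mul_assoc]
     _ = 1 := by rw [n2, ← pow_succ', pow_succ, z6, one_mul]
  have t1 : v * u ^ (3 * k + 1) = (p ^ 2) ^ (3 * k + 1) * (p⁻¹ * (z ^ 3) ^ (3 * k + 1)) := by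
    have c : Commute ((p ^ 2) ^ (3 * k + 1)) v := by
      rw [← hv]
      exact ((cp.inv_right).mul_right (cz.pow_right _)).pow_left _
    rw [← hu, cz.mul_pow, ← mul_assoc, ← c.eq, ← hv, mul_assoc, mul_assoc, ← pow_add, ← pow_mul z 3]
    ring_nf
  have t2 : (v * u ^ (3 * k + 1)) ^ 2 = v ^ 3 := by
    have c : Commute (p⁻¹) ((z ^ 3) ^ (3 * k + 1)) := (cz3.symm.pow_right _).inv_left
    rw [t1, Commute.mul_pow, c.mul_pow, v3, ← pow_mul, mul_comm, pow_mul, n2, one_pow, one_mul,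
      inv_pow, ninv, ← pow_mul]
    · rw [mul_comm (3 * k + 1) 2]
    · exact ((cp.inv_right).mul_right ((cnz3).pow_right _)).pow_left _
  have u18 : u ^ (9 * (2 * k + 1)) = p ^ 2 := by
    rw [← hu, cz.mul_pow, h5, mul_one,
      show 9 * (2 * k + 1) = 2 * (9 * k + 4) + 1 by ring, pow_succ, pow_mul, n2]; simp
  refine ⟨r1, ?_, ?_, ?_, h3.symm⟩
  · have : v * u ^ (3 * k + 1) * v * u ^ (3 * k + 4) = (v * u ^ (3 * k + 1)) ^ 2 * u ^ 3 := by
      rw [sq, show 3 * k + 4 = 3 * k + 1 + 3 by ring, pow_add _ _ 3]; simp only [mul_assoc]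
    rw [this, t2]
    exact mul_eq_one_comm.mp r1
  · rw [u18, ← hu, ← mul_assoc, ← sq, n2, one_mul]
  · rw [← hv]; group

lemma uv_of_tv (k : ℕ) {T V : Γ} (h1 : T ^ 2 = V ^ 3)
    (h2 : ((T ^ 2) ^ k * V⁻¹ * T) ^ 3 * T ^ 2 = 1) :
    ∃ U : Γ, U = (T ^ 2) ^ k * V⁻¹ * T ∧ U ^ 3 * V ^ 3 = 1 ∧
      V * U ^ (3 * k + 1) * V * U ^ (3 * k + 4) = 1 ∧ V * U ^ (3 * k + 1) = T := by
  refine ⟨_, rfl, ?_⟩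
  obtain ⟨U, hU⟩ : ∃ U, U = (T ^ 2) ^ k * V⁻¹ * T := ⟨_, rfl⟩
  rw [← hU] at h2 ⊢
  have cT : Commute (T ^ 2) T := (Commute.refl T).pow_left 2
  have cV : Commute (T ^ 2) V := by rw [h1]; exact (Commute.refl V).pow_left 3
  have u3 : U ^ 3 = (T ^ 2)⁻¹ := eq_inv_of_mul_eq_one_left h2
  have r3 : V * U ^ (3 * k + 1) = T := by
    rw [pow_succ, pow_mul, u3, hU]
    simp [mul_assoc]
  refine ⟨by rw [← h1, h2], ?_, r3⟩
  have : V * U ^ (3 * k + 1) * V * U ^ (3 * k + 4) = (V * U ^ (3 * k + 1)) ^ 2 * U ^ 3 := by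
    rw [sq, show 3 * k + 4 = 3 * k + 1 + 3 by ring, pow_add _ _ 3]; simp only [mul_assoc]
  rw [this, r3]
  exact mul_eq_one_comm.mp h2

end grp
end Stmt19

namespace Stmt19

/-- What we need to know about the two generator presentation of the group. -/
structure PData (G : Type) [Group G] (k : ℕ) (u v : G) : Prop where
  r1 : u ^ 3 * v ^ 3 = 1
  r2 : v * u ^ (3 * k + 1) * v * u ^ (3 * k + 4) = 1
  gen : Subgroup.closure {u, v} = (⊤ : Subgroup G)
  univ : ∀ (Γ : Type) [Group Γ] (U V : Γ), U ^ 3 * V ^ 3 = 1 →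
    V * U ^ (3 * k + 1) * V * U ^ (3 * k + 4) = 1 → ∃ f : G →* Γ, f u = U ∧ f v = V

section pres
variable (s : ℕ)

/-- the generator `p` -/
def gp : PresentedGroup (rels s) := PresentedGroup.of Gen.p
/-- the generator `q` -/
def gq : PresentedGroup (rels s) := PresentedGroup.of Gen.q
/-- the generator `z` -/
def gz : PresentedGroup (rels s) := PresentedGroup.of Gen.z

lemma grels : gp s ^ 2 = gq s ^ 2 ∧ (gp s * gq s) ^ 2 = gq s ^ 2 ∧
    gz s * gp s * (gz s)⁻¹ = gq s ∧ gz s * gq s * (gz s)⁻¹ = gp s * gq s ∧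
    gz s ^ (3 ^ s) = 1 := by
  have key : ∀ r ∈ rels s, PresentedGroup.mk (rels s) r = 1 := fun r hr =>
    PresentedGroup.one_of_mem hr
  refine ⟨?_, ?_, ?_, ?_, ?_⟩
  · rw [← mul_inv_eq_one]
    exact key _ (by simp [rels])
  · rw [← mul_inv_eq_one]
    exact key _ (by simp [rels])
  · rw [← mul_inv_eq_one]
    exact key _ (by simp [rels])
  · rw [← mul_inv_eq_one]
    exact key _ (by simp [rels])
  · exact key _ (by simp [rels])

lemma gclosure : Subgroup.closure {gp s, gq s, gz s} = (⊤ : Subgroup (PresentedGroup (rels s))) := by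
  rw [← PresentedGroup.closure_range_of]
  congr 1
  ext x
  constructor
  · rintro (rfl | rfl | rfl)
    exacts [⟨Gen.p, rfl⟩, ⟨Gen.q, rfl⟩, ⟨Gen.z, rfl⟩]
  · rintro ⟨(_ | _ | _), rfl⟩
    · exact Or.inl rfl
    · exact Or.inr (Or.inl rfl)
    · exact Or.inr (Or.inr rfl)

lemma glift {Γ : Type*} [Group Γ] {P Q Z : Γ} (h1 : P ^ 2 = Q ^ 2) (h2 : (P * Q) ^ 2 = Q ^ 2)
    (h3 : Z * P * Z⁻¹ = Q) (h4 : Z * Q * Z⁻¹ = P * Q) (h5 : Z ^ (3 ^ s) = 1) :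
    ∃ f : PresentedGroup (rels s) →* Γ, f (gp s) = P ∧ f (gq s) = Q ∧ f (gz s) = Z := by
  let F : Gen → Γ := fun g => match g with
    | Gen.p => P
    | Gen.q => Q
    | Gen.z => Z
  have hF : ∀ r ∈ rels s, FreeGroup.lift F r = 1 := by
    rintro r (rfl | rfl | rfl | rfl | rfl)
    · simp [F, h1]
    · simp only [map_mul, map_pow, map_inv, FreeGroup.lift_apply_of, F, h2, mul_inv_cancel]
    · simp only [map_mul, map_pow, map_inv, FreeGroup.lift_apply_of, F, h3, mul_inv_cancel]
    · simp only [map_mul, map_pow, map_inv, FreeGroup.lift_apply_of, F, h4, mul_inv_cancel]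
    · simp [F, h5]
  exact ⟨PresentedGroup.toGroup hF, PresentedGroup.toGroup.of hF, PresentedGroup.toGroup.of hF,
    PresentedGroup.toGroup.of hF⟩

lemma pdata (k : ℕ) (hk : 3 ^ s = 9 * (2 * k + 1)) :
    PData (PresentedGroup (rels s)) k (gp s ^ 2 * gz s)
      ((gp s)⁻¹ * gz s ^ (2 * (3 * k + 1))) := by
  obtain ⟨g1, g2, g3, g4, g5⟩ := grels s
  rw [hk] at g5
  obtain ⟨a1, a2, a3, a4, a5⟩ := uv_of_rels k g1 g2 g3 g4 g5 rfl rfl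
  refine ⟨a1, a2, ?_, ?_⟩
  · rw [eq_top_iff, ← gclosure, Subgroup.closure_le]
    set C := Subgroup.closure {gp s ^ 2 * gz s, (gp s)⁻¹ * gz s ^ (2 * (3 * k + 1))}
    have hu : gp s ^ 2 * gz s ∈ C := Subgroup.subset_closure (by simp)
    have hv : (gp s)⁻¹ * gz s ^ (2 * (3 * k + 1)) ∈ C := Subgroup.subset_closure (by simp)
    have hz : gz s ∈ C := by
      rw [a3]; exact C.mul_mem (C.pow_mem hu _) hu
    have hp : gp s ∈ C := by
      rw [a4]; exact C.mul_mem (C.pow_mem hz _) (C.inv_mem hv)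
    have hq : gq s ∈ C := by
      rw [a5]; exact C.mul_mem (C.mul_mem hz hp) (C.inv_mem hz)
    rintro x (rfl | rfl | rfl)
    exacts [hp, hq, hz]
  · intro Γ _ U V h1 h2
    obtain ⟨P, Q, Z, b1, b2, b3, b4, b5, b6, b7⟩ := rels_of_uv k h1 h2
    rw [← hk] at b5
    obtain ⟨f, f1, f2, f3⟩ := glift s b1 b2 b3 b4 b5
    refine ⟨f, ?_, ?_⟩
    · rw [map_mul, map_pow, f1, f3, b6]
    · rw [map_mul, map_pow, map_inv, f1, f3, b7]

lemma gfinite : Finite (PresentedGroup (rels s)) := by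
  obtain ⟨g1, g2, g3, g4, g5⟩ := grels s
  obtain ⟨b1, b2, n2⟩ := quat_basic g1 g2
  set p := gp s
  set q := gq s
  set z := gz s
  have p4 : p ^ 4 = 1 := by rw [← n2, ← pow_mul]
  have q4 : q ^ 4 = 1 := by rw [← n2, g1, ← pow_mul]
  have hqp : q * p = p ^ 3 * q := by
    have : p ^ 3 * q = p ^ 3 * (p * q * p) := by rw [b1]
    rw [this, ← mul_assoc, ← mul_assoc, ← pow_succ, p4, one_mul]
  have hqpi : ∀ i : ℕ, q * p ^ i = (p ^ 3) ^ i * q := by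
    intro i
    exact (SemiconjBy.pow_right (show SemiconjBy q p (p ^ 3) from hqp) i)
  -- the elements `p^i q^j`
  let S : Set (PresentedGroup (rels s)) := {x | ∃ i j : ℕ, x = p ^ i * q ^ j}
  have Sp : ∀ x ∈ S, p * x ∈ S := by
    rintro x ⟨i, j, rfl⟩
    exact ⟨i + 1, j, by rw [pow_succ', mul_assoc]⟩
  have Sq : ∀ x ∈ S, q * x ∈ S := by
    rintro x ⟨i, j, rfl⟩
    exact ⟨3 * i, j + 1, by rw [← mul_assoc, hqpi, pow_succ' q, pow_mul, mul_assoc]⟩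
  have Sz : ∀ x ∈ S, z * x * z⁻¹ ∈ S := by
    rintro x ⟨i, j, rfl⟩
    have : z * (p ^ i * q ^ j) * z⁻¹ = q ^ i * (p * q) ^ j := by
      calc z * (p ^ i * q ^ j) * z⁻¹ = (z * p ^ i * z⁻¹) * (z * q ^ j * z⁻¹) := by
            simp [mul_assoc]
        _ = q ^ i * (p * q) ^ j := by rw [← conj_pow, ← conj_pow, g3, g4]
    rw [this]
    have h1 : ∀ j : ℕ, (p * q) ^ j ∈ S := by
      intro j
      induction j with
      | zero => exact ⟨0, 0, by simp⟩
      | succ n ih => rw [pow_succ', mul_assoc]; exact Sp _ (Sq _ ih)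
    have h2 : ∀ i : ℕ, q ^ i * (p * q) ^ j ∈ S := by
      intro i
      induction i with
      | zero => simpa using h1 j
      | succ n ih => rw [pow_succ', mul_assoc]; exact Sq _ ih
    exact h2 i
  let T : Set (PresentedGroup (rels s)) := {x | ∃ y ∈ S, ∃ n : ℕ, x = y * z ^ n}
  have Tp : ∀ x ∈ T, p * x ∈ T := by
    rintro x ⟨y, hy, n, rfl⟩
    exact ⟨p * y, Sp _ hy, n, by rw [mul_assoc]⟩
  have Tq : ∀ x ∈ T, q * x ∈ T := by
    rintro x ⟨y, hy, n, rfl⟩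
    exact ⟨q * y, Sq _ hy, n, by rw [mul_assoc]⟩
  have Tz : ∀ x ∈ T, z * x ∈ T := by
    rintro x ⟨y, hy, n, rfl⟩
    exact ⟨z * y * z⁻¹, Sz _ hy, n + 1, by rw [pow_succ']; group⟩
  have Tpow : ∀ g, (∀ x ∈ T, g * x ∈ T) → ∀ n : ℕ, ∀ x ∈ T, g ^ n * x ∈ T := by
    intro g hg n x hx
    induction n with
    | zero => simpa using hx
    | succ n ih => rw [pow_succ', mul_assoc]; exact hg _ ih
  have all : ∀ x, x ∈ T := by
    intro x
    have hx : x ∈ Subgroup.closure {p, q, z} := by rw [gclosure]; trivial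
    induction hx using Subgroup.closure_induction_left with
    | one => exact ⟨1, ⟨0, 0, by simp⟩, 0, by simp⟩
    | mul_left x hx y hy ih =>
      rcases hx with (rfl | rfl | rfl)
      exacts [Tp _ ih, Tq _ ih, Tz _ ih]
    | inv_mul_cancel x hx y hy ih =>
      rcases hx with (rfl | rfl | rfl)
      · rw [show p⁻¹ = p ^ 3 by rw [inv_eq_iff_mul_eq_one, ← pow_succ', p4]]
        exact Tpow _ Tp _ _ ih
      · rw [show q⁻¹ = q ^ 3 by rw [inv_eq_iff_mul_eq_one, ← pow_succ', q4]]
        exact Tpow _ Tq _ _ ih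
      · have : 0 < 3 ^ s := by positivity
        rw [show z⁻¹ = z ^ (3 ^ s - 1) by
          rw [inv_eq_iff_mul_eq_one, ← pow_succ', Nat.sub_add_cancel this, g5]]
        exact Tpow _ Tz _ _ ih
  have fp : IsOfFinOrder p := isOfFinOrder_iff_pow_eq_one.mpr ⟨4, by norm_num, p4⟩
  have fq : IsOfFinOrder q := isOfFinOrder_iff_pow_eq_one.mpr ⟨4, by norm_num, q4⟩
  have fz : IsOfFinOrder z := isOfFinOrder_iff_pow_eq_one.mpr ⟨3 ^ s, by positivity, g5⟩
  have Fp : Finite (Submonoid.powers p) := fp.finite_powers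
  have Fq : Finite (Submonoid.powers q) := fq.finite_powers
  have Fz : Finite (Submonoid.powers z) := fz.finite_powers
  refine Finite.of_surjective
    (fun x : Submonoid.powers p × Submonoid.powers q × Submonoid.powers z =>
      (x.1 : PresentedGroup (rels s)) * x.2.1 * x.2.2) ?_
  intro x
  obtain ⟨y, ⟨i, j, rfl⟩, n, rfl⟩ := all x
  exact ⟨⟨⟨p ^ i, i, rfl⟩, ⟨q ^ j, j, rfl⟩, ⟨z ^ n, n, rfl⟩⟩, rfl⟩

/-- A homomorphism from the quaternion group, from a pair of elements. -/
lemma quat_lift {Γ : Type*} [Group Γ] {p q : Γ} (h1 : p ^ 2 = q ^ 2) (h2 : (p * q) ^ 2 = q ^ 2) :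
    ∃ f : QuaternionGroup 2 →* Γ, f (QuaternionGroup.a 1) = p ∧ f (QuaternionGroup.xa 0) = q := by
  obtain ⟨b1, b2, n2⟩ := quat_basic h1 h2
  have p4 : p ^ 4 = 1 := by rw [← n2, ← pow_mul]
  have hqp : q * p = p⁻¹ * q := by rw [eq_inv_mul_iff_mul_eq, ← mul_assoc, b1]
  -- powers of `p` indexed by `ZMod 4`
  let e : Multiplicative (ZMod (2 * 2)) →* Γ :=
    AddMonoidHom.toMultiplicativeLeft
      (ZMod.lift (2 * 2) ⟨zmultiplesHom (Additive Γ) (Additive.ofMul p), by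
        change Additive.ofMul (p ^ ((2 * 2 : ℕ) : ℤ)) = _
        rw [zpow_natCast]; exact congrArg Additive.ofMul p4⟩)
  let E : ZMod (2 * 2) → Γ := fun i => e (Multiplicative.ofAdd i)
  have Eadd : ∀ i j, E (i + j) = E i * E j := fun i j => by
    simp only [E, ofAdd_add, map_mul]
  have E0 : E 0 = 1 := by simp only [E, ofAdd_zero, map_one]
  have Eneg : ∀ i, E (-i) = (E i)⁻¹ := fun i => by simp only [E, ofAdd_neg, map_inv]
  have E1 : E 1 = p := by
    change Additive.toMul (ZMod.lift (2 * 2) _ (1 : ZMod (2 * 2))) = p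
    have : (1 : ZMod (2 * 2)) = ((1 : ℤ) : ZMod (2 * 2)) := by simp
    rw [this, ZMod.lift_coe]
    simp
  have Epow : ∀ i : ZMod (2 * 2), E i = p ^ i.val := by
    intro i
    have : ∀ n : ℕ, E (n : ZMod (2 * 2)) = p ^ n := by
      intro n
      induction n with
      | zero => simpa using E0
      | succ n ih => rw [Nat.cast_succ, Eadd, ih, E1, pow_succ]
    rw [← this, ZMod.natCast_zmod_val]
  have E2 : E 2 = q ^ 2 := by
    rw [← h1, show (2 : ZMod (2 * 2)) = 1 + 1 by rfl, Eadd, E1, sq]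
  have sc : ∀ i, q * E i = (E i)⁻¹ * q := by
    intro i
    rw [Epow, ← inv_pow]
    exact (SemiconjBy.pow_right (show SemiconjBy q p p⁻¹ from hqp) _)
  have sc' : ∀ i, E i * q = q * (E i)⁻¹ := by
    intro i
    have := sc (-i)
    rw [Eneg, inv_inv] at this
    exact this.symm
  have Ecomm : ∀ i j, E i * E j = E j * E i := fun i j => by rw [← Eadd, add_comm, Eadd]
  refine ⟨⟨⟨fun x => match x with
    | QuaternionGroup.a i => E i
    | QuaternionGroup.xa i => q * E i, ?_⟩, ?_⟩, E1, ?_⟩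
  · exact E0
  · rintro (i | i) (j | j)
    · simp only [QuaternionGroup.a_mul_a]; exact Eadd i j
    · simp only [QuaternionGroup.a_mul_xa]
      rw [← mul_assoc, sc', mul_assoc, sub_eq_add_neg, Eadd, Eneg, ← Eneg, Ecomm]
    · simp only [QuaternionGroup.xa_mul_a]
      rw [Eadd, mul_assoc]
    · simp only [QuaternionGroup.xa_mul_xa]
      change _ = q * E i * (q * E j)
      rw [← mul_assoc, mul_assoc q, sc', ← mul_assoc, ← pow_two q, sub_eq_add_neg, Eadd, Eadd, Eneg]
      rw [show ((2 : ℕ) : ZMod (2 * 2)) = 2 by rfl, E2, mul_assoc, mul_assoc, ← Eneg, Ecomm]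
  · change q * E 0 = q
    rw [E0, mul_one]

lemma exists_quat (hs : 1 ≤ s) : ∃ f : QuaternionGroup 2 →* PresentedGroup (rels s),
    Function.Injective f := by
  obtain ⟨g1, g2, g3, g4, g5⟩ := grels s
  obtain ⟨f, fa, fx⟩ := quat_lift g1 g2
  let P : Matrix.SpecialLinearGroup (Fin 2) (ZMod 3) := ⟨!![0, 1; 2, 0], by decide⟩
  let Q : Matrix.SpecialLinearGroup (Fin 2) (ZMod 3) := ⟨!![1, 2; 2, 2], by decide⟩
  let Z : Matrix.SpecialLinearGroup (Fin 2) (ZMod 3) := ⟨!![1, 2; 0, 1], by decide⟩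
  have t1 : P ^ 2 = Q ^ 2 := by decide
  have t2 : (P * Q) ^ 2 = Q ^ 2 := by decide
  have t3 : Z * P * Z⁻¹ = Q := by
    rw [mul_inv_eq_iff_eq_mul]; decide
  have t4 : Z * Q * Z⁻¹ = P * Q := by
    rw [mul_inv_eq_iff_eq_mul]; decide
  have t5 : Z ^ (3 ^ s) = 1 := by
    obtain ⟨m, rfl⟩ : ∃ m, s = m + 1 := ⟨s - 1, by omega⟩
    rw [pow_succ', pow_mul, show Z ^ 3 = 1 by decide, one_pow]
  obtain ⟨g, gP, gQ, -⟩ := glift s t1 t2 t3 t4 t5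
  refine ⟨f, ?_⟩
  have key : Function.Injective (g.comp f) := by
    rw [injective_iff_map_eq_one]
    have ha : ∀ i : ZMod (2 * 2), g.comp f (QuaternionGroup.a i) = P ^ i.val := by
      intro i
      have : (QuaternionGroup.a i : QuaternionGroup 2) = QuaternionGroup.a 1 ^ i.val := by
        rw [QuaternionGroup.a_one_pow, ZMod.natCast_zmod_val]
      rw [this, map_pow, MonoidHom.comp_apply, fa, gP]
    have hx : ∀ i : ZMod (2 * 2), g.comp f (QuaternionGroup.xa i) = Q * P ^ i.val := by
      intro i
      have : (QuaternionGroup.xa i : QuaternionGroup 2) =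
          QuaternionGroup.xa 0 * QuaternionGroup.a i := by
        rw [QuaternionGroup.xa_mul_a, zero_add]
      rw [this, map_mul, ha, MonoidHom.comp_apply, fx, gQ]
    have d1 : ∀ i : Fin 4, P ^ i.val = 1 → i = 0 := by decide
    have d2 : ∀ i : Fin 4, Q * P ^ i.val ≠ 1 := by decide
    rintro (i | i) h
    · rw [ha] at h
      have : i = 0 := d1 i h
      rw [this]; rfl
    · rw [hx] at h
      exact absurd h (d2 i)
  exact Function.Injective.of_comp (f := g) key

lemma exists_quat_subgroup (hs : 1 ≤ s) : ∃ H : Subgroup (PresentedGroup (rels s)),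
    Nonempty (H ≃* QuaternionGroup 2) := by
  obtain ⟨f, hf⟩ := exists_quat s hs
  exact ⟨f.range, ⟨(MonoidHom.ofInjective hf).symm⟩⟩

lemma two_dvd_card (hs : 1 ≤ s) : 2 ∣ Nat.card (PresentedGroup (rels s)) := by
  obtain ⟨f, hf⟩ := exists_quat s hs
  have := Subgroup.card_subgroup_dvd_card f.range
  rw [← Nat.card_congr (MonoidHom.ofInjective hf).toEquiv, Nat.card_eq_fintype_card,
    QuaternionGroup.card] at this
  exact (by norm_num : 2 ∣ 4 * 2).trans this

end pres
end Stmt19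

namespace Stmt19

/-- The affine group `M ⋊ G` attached to an additive action of `G` on `M`. -/
@[ext] structure Aff {M G : Type} [AddCommGroup M] [Group G] (ρ : G →* AddMonoid.End M) : Type where
  fst : M
  snd : G

namespace Aff
variable {M G : Type} [AddCommGroup M] [Group G] {ρ : G →* AddMonoid.End M}

instance : Mul (Aff ρ) := ⟨fun a b => ⟨a.fst + ρ a.snd b.fst, a.snd * b.snd⟩⟩
instance : One (Aff ρ) := ⟨⟨0, 1⟩⟩
instance : Inv (Aff ρ) := ⟨fun a => ⟨-(ρ a.snd⁻¹ a.fst), a.snd⁻¹⟩⟩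

@[simp] lemma mul_fst (a b : Aff ρ) : (a * b).fst = a.fst + ρ a.snd b.fst := rfl
@[simp] lemma mul_snd (a b : Aff ρ) : (a * b).snd = a.snd * b.snd := rfl
@[simp] lemma one_fst : (1 : Aff ρ).fst = 0 := rfl
@[simp] lemma one_snd : (1 : Aff ρ).snd = 1 := rfl
@[simp] lemma inv_fst (a : Aff ρ) : (a⁻¹).fst = -(ρ a.snd⁻¹ a.fst) := rfl
@[simp] lemma inv_snd (a : Aff ρ) : (a⁻¹).snd = a.snd⁻¹ := rfl

instance : Group (Aff ρ) := Group.ofLeftAxioms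
  (fun a b c => by
    ext
    · simp only [mul_fst, mul_snd, map_mul, map_add, add_assoc]
      rfl
    · simp [mul_assoc])
  (fun a => by ext <;> simp)
  (fun a => by ext <;> simp)

/-- The projection to `G`. -/
def proj (ρ : G →* AddMonoid.End M) : Aff ρ →* G where
  toFun := Aff.snd
  map_one' := rfl
  map_mul' _ _ := rfl

@[simp] lemma pow_snd (a : Aff ρ) (n : ℕ) : (a ^ n).snd = a.snd ^ n := map_pow (proj ρ) a n

lemma pow_fst (a : Aff ρ) (n : ℕ) : (a ^ n).fst = ∑ i ∈ Finset.range n, ρ (a.snd ^ i) a.fst := by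
  induction n with
  | zero => rfl
  | succ n ih => rw [pow_succ, mul_fst, ih, Finset.sum_range_succ, pow_snd]

end Aff

variable {G : Type} [Group G] {k : ℕ} {u v : G}

lemma PData.exists_der (hd : PData G k u v) {M : Type} [AddCommGroup M]
    (ρ : G →* AddMonoid.End M) (U V : Aff ρ) (hU : U.snd = u) (hV : V.snd = v)
    (e1 : U ^ 3 * V ^ 3 = 1) (e2 : V * U ^ (3 * k + 1) * V * U ^ (3 * k + 4) = 1) :
    ∃ (f : G →* Aff ρ), (∀ g, (f g).snd = g) ∧ f u = U ∧ f v = V := by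
  obtain ⟨f, fu, fv⟩ := hd.univ (Aff ρ) U V e1 e2
  refine ⟨f, ?_, fu, fv⟩
  have : (Aff.proj ρ).comp f = MonoidHom.id G := by
    apply MonoidHom.eq_of_eqOn_dense hd.gen
    rintro x (rfl | rfl)
    · change (f x).snd = x
      rw [fu, hU]
    · change (f x).snd = x
      rw [fv, hV]
  intro g
  exact DFunLike.congr_fun this g

/-- The group ring element of a group element. -/
noncomputable abbrev o (g : G) : MonoidAlgebra ℤ G := MonoidAlgebra.of ℤ G g

/-- Geometric sums. -/
def gs {R : Type*} [Semiring R] (a : R) (n : ℕ) : R := ∑ i ∈ Finset.range n, a ^ i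

lemma gs_mul {R : Type*} [Ring R] (a : R) (n : ℕ) : gs a n * (a - 1) = a ^ n - 1 := geom_sum_mul a n
lemma mul_gs {R : Type*} [Ring R] (a : R) (n : ℕ) : (a - 1) * gs a n = a ^ n - 1 := mul_geom_sum a n
lemma gs_three {R : Type*} [Semiring R] (a : R) : gs a 3 = 1 + a + a ^ 2 := by
  simp [gs, Finset.sum_range_succ]
lemma gs_map {R S : Type*} [Semiring R] [Semiring S] (f : R →+* S) (a : R) (n : ℕ) :
    f (gs a n) = gs (f a) n := by simp [gs]
lemma gs_c {R : Type*} [CommSemiring R] (X : R) (k : ℕ) :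
    gs X (3 * k + 1) = gs (X ^ 3) k * (1 + X + X ^ 2) + X ^ (3 * k) := by
  induction k with
  | zero => simp [gs]
  | succ n ih =>
    have : gs X (3 * (n + 1) + 1) = gs X (3 * n + 1) + X ^ (3 * n + 1) + X ^ (3 * n + 2)
      + X ^ (3 * n + 3) := by
      simp only [gs]
      rw [show 3 * (n + 1) + 1 = (3 * n + 1) + 1 + 1 + 1 by ring, Finset.sum_range_succ,
        Finset.sum_range_succ, Finset.sum_range_succ]
    rw [this, ih, show gs (X ^ 3) (n + 1) = gs (X ^ 3) n + (X ^ 3) ^ n from Finset.sum_range_succ _ _]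
    ring
lemma gs_c3 {R : Type*} [CommSemiring R] (X : R) (n : ℕ) :
    gs X (n + 3) = 1 + X + X ^ 2 + X ^ 3 * gs X n := by
  simp only [gs]
  rw [add_comm n 3, Finset.sum_range_add, Finset.mul_sum]
  simp [Finset.sum_range_succ, pow_add]

section entries
variable (k u v)
/-- the element `t = v u^c` in the group ring -/
noncomputable def eT : MonoidAlgebra ℤ G := o v * o u ^ (3 * k + 1)
noncomputable def a11 : MonoidAlgebra ℤ G :=
  o v * gs (o u) (3 * k + 1) + eT k u v * o v * gs (o u) (3 * k + 4)
noncomputable def a12 : MonoidAlgebra ℤ G := 1 + eT k u v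
noncomputable def a21 : MonoidAlgebra ℤ G := gs (o u) 3
noncomputable def a22 : MonoidAlgebra ℤ G := o u ^ 3 * gs (o v) 3
noncomputable def b1 : MonoidAlgebra ℤ G := o u ^ 3 * (1 - eT k u v)
noncomputable def b2 : MonoidAlgebra ℤ G := o v - 1
end entries

lemma eT_eq : eT k u v = o (v * u ^ (3 * k + 1)) := by simp [eT, o]

lemma PData.t_sq (hd : PData G k u v) : (v * u ^ (3 * k + 1)) ^ 2 = (u ^ 3)⁻¹ := by
  have : v * u ^ (3 * k + 1) * v * u ^ (3 * k + 4) = (v * u ^ (3 * k + 1)) ^ 2 * u ^ 3 := by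
    rw [sq, show 3 * k + 4 = 3 * k + 1 + 3 by ring, pow_add _ _ 3]; simp only [mul_assoc]
  have h := hd.r2
  rw [this] at h
  exact eq_inv_of_mul_eq_one_left h

lemma PData.t_cube (hd : PData G k u v) : v ^ 3 = (u ^ 3)⁻¹ := (inv_eq_of_mul_eq_one_right hd.r1).symm

/-- Derivations with values in a left module, when the Fox equations hold. -/
lemma PData.der_left (hd : PData G k u v) {M : Type} [AddCommGroup M] [Module (MonoidAlgebra ℤ G) M]
    (x y : M) (e1 : a11 k u v • x + a12 k u v • y = 0) (e2 : a21 u • x + a22 u v • y = 0) :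
    ∃ D : G → M, (∀ g h, D (g * h) = D g + o g • D h) ∧ D u = x ∧ D v = y := by
  let ρ : G →* AddMonoid.End M :=
    ((Module.toAddMonoidEnd (MonoidAlgebra ℤ G) M).toMonoidHom).comp (MonoidAlgebra.of ℤ G)
  have hρ : ∀ g m, ρ g m = o g • m := fun g m => rfl
  have hpow : ∀ (m : M) (g : G) (n : ℕ), ((⟨m, g⟩ : Aff ρ) ^ n).fst = gs (o g) n • m := by
    intro m g n
    rw [Aff.pow_fst, gs, Finset.sum_smul]
    refine Finset.sum_congr rfl fun i _ => ?_
    rw [hρ, o, map_pow]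
  obtain ⟨f, f1, f2, f3⟩ := hd.exists_der ρ ⟨x, u⟩ ⟨y, v⟩ rfl rfl (by
      ext
      · rw [Aff.mul_fst, hpow, hpow, hρ, Aff.one_fst, ← e2, smul_smul, a21, a22, Aff.pow_snd]
        simp [o]
      · rw [Aff.mul_snd, Aff.pow_snd, Aff.pow_snd]; exact hd.r1) (by
      ext
      · simp only [Aff.mul_fst, Aff.mul_snd, hpow, hρ, Aff.one_fst, Aff.pow_snd]
        rw [← e1, a11, a12, eT]
        simp only [o, map_mul, map_pow, add_smul, smul_add, one_smul, mul_smul]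
        abel
      · simp only [Aff.mul_snd, Aff.pow_snd]; exact hd.r2)
  refine ⟨fun g => (f g).fst, fun g h => ?_, by simp only [f2], by simp only [f3]⟩
  change (f (g * h)).fst = (f g).fst + o g • (f h).fst
  rw [map_mul, Aff.mul_fst, f1, hρ]

lemma comm_identity {L : Type*} [CommRing L] (X Y : L) (h : X * Y = 1) (k : ℕ) :
    gs (X ^ 3) k * (1 + Y + Y ^ 2) - Y ^ (3 * k + 1) * gs X (3 * k + 1) * Y ^ 2 * X ^ (3 * k)
      + Y ^ 3 = 0 ∧
    gs (X ^ 3) k * (1 + Y + Y ^ 2) + Y ^ 3 * Y ^ (3 * k + 1) * X ^ (3 * k) * (1 + Y + Y ^ 2)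
      - Y ^ 3 * Y ^ (3 * k + 1) * gs X (3 * k + 4) * Y ^ 2 * X ^ (3 * k) + Y ^ 3 = 0 := by
  have hp : Y ^ (3 * k) * X ^ (3 * k) = 1 := by rw [← mul_pow, mul_comm Y, h, one_pow]
  have hg : gs (X ^ 3) k * (X ^ 3 - 1) = X ^ (3 * k) - 1 := by rw [gs_mul, pow_mul]
  have hXY : 1 + Y + Y ^ 2 = (1 + X + X ^ 2) * Y ^ 2 := by
    linear_combination (-Y - (X * Y + 1)) * h
  have hb : gs (X ^ 3) k * (1 + Y + Y ^ 2) - Y ^ 3 * gs X (3 * k + 1) + Y ^ 3 = 0 := by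
    rw [gs_c]
    have h3 : Y ^ 2 = X * Y ^ 3 := by linear_combination (-Y ^ 2) * h
    rw [hXY, h3]
    linear_combination Y ^ 3 * hg
  have h3 : X ^ 3 * Y ^ 3 = 1 := by rw [← mul_pow, h, one_pow]
  constructor
  · rw [← hb]
    linear_combination (-Y ^ 3 * gs X (3 * k + 1)) * hp
  · rw [← hb, show 3 * k + 4 = 3 * k + 1 + 3 by ring, gs_c3, hXY]
    have e : Y ^ (3 * k + 1) = Y ^ (3 * k) * Y := pow_succ _ _
    rw [e]
    linear_combination (Y ^ 4 * (1 + X + X ^ 2) * Y ^ 2 - Y ^ 6 * (1 + X + X ^ 2 + X ^ 3 * gs X (3 * k + 1))) * hp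
      - Y ^ 3 * gs X (3 * k + 1) * h3
end Stmt19

namespace Stmt19
variable {G : Type} [Group G] {k : ℕ} {u v : G}

lemma ma_ind {P : MonoidAlgebra ℤ G → Prop} (h0 : ∀ g, P (o g)) (hadd : ∀ x y, P x → P y → P (x + y))
    (hsmul : ∀ (n : ℤ) x, P x → P (n • x)) (x : MonoidAlgebra ℤ G) : P x := by
  induction x using MonoidAlgebra.induction_linear with
  | zero => simpa using hsmul 0 _ (h0 1)
  | add x y hx hy => exact hadd x y hx hy
  | single g n =>
    have := hsmul n _ (h0 g)
    simpa [o] using this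

lemma o_one : o (1 : G) = 1 := map_one _
lemma o_mul (g h : G) : o (g * h) = o g * o h := map_mul _ _ _
lemma o_pow (g : G) (n : ℕ) : o (g ^ n) = o g ^ n := map_pow _ _ _
lemma o_inv_mul (g : G) : o g⁻¹ * o g = 1 := by rw [← o_mul, inv_mul_cancel, o_one]
lemma o_mul_inv (g : G) : o g * o g⁻¹ = 1 := by rw [← o_mul, mul_inv_cancel, o_one]

/-- The augmentation. -/
noncomputable def aug (G : Type) [Group G] : MonoidAlgebra ℤ G →ₐ[ℤ] ℤ := MonoidAlgebra.lift ℤ ℤ G 1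

@[simp] lemma aug_o (g : G) : aug G (o g) = 1 := by simp [aug]

lemma left_ideal_gen (hd : PData G k u v) (x : MonoidAlgebra ℤ G) :
    ∃ a b, x - (aug G x : MonoidAlgebra ℤ G) = a * (o u - 1) + b * (o v - 1) := by
  have key : ∀ g : G, ∃ a b, o g - 1 = a * (o u - 1) + b * (o v - 1) := by
    intro g
    have hg : g ∈ Subgroup.closure {u, v} := by rw [hd.gen]; trivial
    induction hg using Subgroup.closure_induction with
    | mem x hx =>
      rcases hx with rfl | rfl
      · exact ⟨1, 0, by simp⟩
      · exact ⟨0, 1, by simp⟩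
    | one => exact ⟨0, 0, by rw [o_one]; simp⟩
    | mul x y _ _ hx hy =>
      obtain ⟨a, b, h⟩ := hx
      obtain ⟨a', b', h'⟩ := hy
      refine ⟨a + o x * a', b + o x * b', ?_⟩
      have : o (x * y) - 1 = (o x - 1) + o x * (o y - 1) := by
        simp only [o, map_mul]; noncomm_ring
      rw [this, h, h']; noncomm_ring
    | inv x _ hx =>
      obtain ⟨a, b, h⟩ := hx
      refine ⟨- o x⁻¹ * a, - o x⁻¹ * b, ?_⟩
      have : o x⁻¹ - 1 = - o x⁻¹ * (o x - 1) := by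
        rw [neg_mul, mul_sub, o_inv_mul]; simp
      rw [this, h]; noncomm_ring
  induction x using ma_ind with
  | h0 g => rw [aug_o, Int.cast_one]; exact key g
  | hadd x y hx hy =>
    obtain ⟨a, b, h⟩ := hx
    obtain ⟨a', b', h'⟩ := hy
    refine ⟨a + a', b + b', ?_⟩
    rw [map_add, Int.cast_add, add_sub_add_comm, h, h']; noncomm_ring
  | hsmul n x hx =>
    obtain ⟨a, b, h⟩ := hx
    refine ⟨n • a, n • b, ?_⟩
    rw [smul_mul_assoc, smul_mul_assoc, ← smul_add, ← h, map_smul, smul_sub]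
    simp

lemma ex0 (hd : PData G k u v) (x : MonoidAlgebra ℤ G) :
    aug G x = 0 ↔ ∃ a b, x = a * (o u - 1) + b * (o v - 1) := by
  constructor
  · intro h
    obtain ⟨a, b, e⟩ := left_ideal_gen hd x
    exact ⟨a, b, by rw [← e, h]; simp⟩
  · rintro ⟨a, b, rfl⟩
    simp only [map_add, map_mul, map_sub, aug_o, map_one, sub_self, mul_zero, add_zero]

lemma aug_mul_N [Fintype G] (x : MonoidAlgebra ℤ G) :
    x * (∑ g : G, o g) = aug G x • (∑ g : G, o g) := by
  induction x using ma_ind with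
  | h0 g =>
    rw [aug_o, one_smul, Finset.mul_sum]
    refine Fintype.sum_equiv (Equiv.mulLeft g) _ _ fun h => ?_
    simp only [o, ← map_mul]; rfl
  | hadd x y hx hy => rw [add_mul, hx, hy, map_add, add_smul]
  | hsmul n x hx => rw [smul_mul_assoc, hx, map_smul, smul_smul]; rfl

lemma N_ne [Fintype G] (n : ℤ) (h : n • (∑ g : G, o g) = 0) : n = 0 := by
  have h2 := congrArg (fun x => MonoidAlgebra.coeff x 1) h
  classical
  simp only [MonoidAlgebra.coeff_smul, MonoidAlgebra.coeff_sum] at h2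
  simpa [o, Finsupp.single_apply] using h2

lemma ex4 [Fintype G] (hd : PData G k u v) (x : MonoidAlgebra ℤ G) :
    x * (∑ g : G, o g) = 0 ↔ ∃ a b, x = a * (o u - 1) + b * (o v - 1) := by
  rw [← ex0 hd, aug_mul_N]
  constructor
  · exact N_ne _
  · intro h; rw [h, zero_smul]

lemma N_mul [Fintype G] (h : G) : (∑ g : G, o g) * o h = ∑ g : G, o g := by
  rw [Finset.sum_mul]
  refine Fintype.sum_equiv (Equiv.mulRight h) _ _ fun g => ?_
  simp only [o, ← map_mul]; rfl

lemma eq_N_of_inv [Fintype G] (m : MonoidAlgebra ℤ G) (h : ∀ g, m * o g = m) :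
    ∃ n : MonoidAlgebra ℤ G, m = n * ∑ g : G, o g := by
  refine ⟨(m.coeff 1 : MonoidAlgebra ℤ G), ?_⟩
  ext g
  have h1 : m.coeff g = m.coeff 1 := by
    conv_lhs => rw [← h g]
    simp [o]
  classical
  rw [h1, aug_mul_N]
  simp only [MonoidAlgebra.coeff_smul, MonoidAlgebra.coeff_sum]
  simp [o, Finsupp.single_apply]

lemma PData.hcomm (hd : PData G k u v) (g : G) : u ^ 3 * g = g * u ^ 3 := by
  have h3 : u ^ 3 = (v ^ 3)⁻¹ := eq_inv_of_mul_eq_one_left hd.r1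
  have hg : g ∈ Subgroup.closure {u, v} := by rw [hd.gen]; trivial
  have : g ∈ Subgroup.centralizer {u ^ 3} := by
    refine (Subgroup.closure_le _).2 ?_ hg
    rintro x (rfl | rfl)
    · simp only [SetLike.mem_coe, Subgroup.mem_centralizer_singleton_iff]; group
    · simp only [SetLike.mem_coe, Subgroup.mem_centralizer_singleton_iff]
      rw [h3]; group
  exact (Subgroup.mem_centralizer_singleton_iff.1 this).symm

lemma inv_of_tv (hd : PData G k u v) (m : MonoidAlgebra ℤ G)
    (ht : m * o (v * u ^ (3 * k + 1)) = m) (hv : m * o v = m) (g : G) : m * o g = m := by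
  let S : Subgroup G :=
    { carrier := {g | m * o g = m}
      one_mem' := by change m * o 1 = m; rw [o_one, mul_one]
      mul_mem' := by
        intro a b ha hb
        change m * o (a * b) = m
        change m * o a = m at ha
        change m * o b = m at hb
        rw [o_mul, ← mul_assoc, ha, hb]
      inv_mem' := by
        intro a ha
        change m * o a⁻¹ = m
        change m * o a = m at ha
        nth_rw 1 [← ha]
        rw [mul_assoc, o_mul_inv, mul_one] }
  have hvS : v ∈ S := hv
  have htS : v * u ^ (3 * k + 1) ∈ S := ht
  have hu1 : u ^ (3 * k + 1) ∈ S := by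
    have := S.mul_mem (S.inv_mem hvS) htS
    rwa [inv_mul_cancel_left] at this
  have hu3 : u ^ 3 ∈ S := by
    rw [show u ^ 3 = (v ^ 3)⁻¹ from eq_inv_of_mul_eq_one_left hd.r1]
    exact S.inv_mem (S.pow_mem hvS 3)
  have huS : u ∈ S := by
    have := S.mul_mem (S.inv_mem (S.pow_mem hu3 k)) hu1
    rwa [← pow_mul, pow_succ, inv_mul_cancel_left] at this
  have : Subgroup.closure {u, v} ≤ S := (Subgroup.closure_le _).2 (by
    rintro x (rfl | rfl)
    exacts [huS, hvS])
  rw [hd.gen] at this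
  exact this (Subgroup.mem_top g)

lemma ex3 [Fintype G] (hd : PData G k u v) (m : MonoidAlgebra ℤ G) :
    (m * b1 k u v = 0 ∧ m * b2 v = 0) ↔ ∃ r, m = r * ∑ g : G, o g := by
  constructor
  · rintro ⟨h1, h2⟩
    refine eq_N_of_inv m (inv_of_tv hd m ?_ ?_)
    · rw [b1, eT_eq] at h1
      have hc : o u ^ 3 * (1 - o (v * u ^ (3 * k + 1))) = (1 - o (v * u ^ (3 * k + 1))) * o u ^ 3 := by
        rw [mul_sub, sub_mul, mul_one, one_mul]
        simp only [o, ← map_pow]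
        rw [← map_mul, ← map_mul, hd.hcomm]
      rw [hc, ← mul_assoc] at h1
      have h5 : o u ^ 3 * o (u ^ 3)⁻¹ = 1 := by
        rw [← o_pow, o_mul_inv]
      have h6 := congrArg (· * o (u ^ 3)⁻¹) h1
      simp only [mul_assoc, h5, mul_one, zero_mul] at h6
      rw [mul_sub, mul_one, sub_eq_zero] at h6
      exact h6.symm
    · rw [b2, mul_sub, mul_one, sub_eq_zero] at h2
      exact h2
  · rintro ⟨r, rfl⟩
    rw [b1, b2, eT_eq]
    constructor
    · rw [mul_assoc, ← mul_assoc _ (o u ^ 3), o, ← map_pow, N_mul, mul_sub, N_mul]; simp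
    · rw [mul_assoc, mul_sub, N_mul]; simp

lemma d1d2 (hd : PData G k u v) :
    a11 k u v * (o u - 1) + a12 k u v * (o v - 1) = 0 ∧
    a21 u * (o u - 1) + a22 u v * (o v - 1) = 0 := by
  have h1 : o u ^ 3 * o v ^ 3 = 1 := by
    simp only [o, ← map_pow]; rw [← map_mul, hd.r1, map_one]
  have h2 : o v * o u ^ (3 * k + 1) * o v * o u ^ (3 * k + 4) = 1 := by
    simp only [o, ← map_pow]; rw [← map_mul, ← map_mul, ← map_mul, hd.r2, map_one]
  constructor
  · rw [a11, a12, add_mul, mul_assoc, gs_mul, mul_assoc, gs_mul, mul_sub, mul_sub, eT, h2]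
    noncomm_ring
  · rw [a21, a22, mul_assoc, gs_mul, gs_mul, mul_sub, h1]; simp

lemma ex1 (hd : PData G k u v) (a b : MonoidAlgebra ℤ G) :
    a * (o u - 1) + b * (o v - 1) = 0 ↔
    ∃ α β, a = α * a11 k u v + β * a21 u ∧ b = α * a12 k u v + β * a22 u v := by
  constructor
  swap
  · rintro ⟨α, β, rfl, rfl⟩
    obtain ⟨h1, h2⟩ := d1d2 hd
    calc _ = α * (a11 k u v * (o u - 1) + a12 k u v * (o v - 1))
        + β * (a21 u * (o u - 1) + a22 u v * (o v - 1)) := by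
          simp only [add_mul, mul_add, mul_assoc]; abel
      _ = 0 := by rw [h1, h2]; simp
  intro hab
  let S : Submodule (MonoidAlgebra ℤ G) (MonoidAlgebra ℤ G × MonoidAlgebra ℤ G) :=
    Submodule.span _ {(a11 k u v, a12 k u v), (a21 u, a22 u v)}
  let M := (MonoidAlgebra ℤ G × MonoidAlgebra ℤ G) ⧸ S
  have hS : ∀ x y : MonoidAlgebra ℤ G, x • S.mkQ (1, 0) + y • S.mkQ (0, 1) = S.mkQ (x, y) := by
    intro x y
    rw [← map_smul, ← map_smul, ← map_add]; simp
  obtain ⟨D, hD, Du, Dv⟩ := hd.der_left (M := M) (S.mkQ (1, 0)) (S.mkQ (0, 1))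
    (by
      rw [hS, Submodule.mkQ_apply, Submodule.Quotient.mk_eq_zero]
      exact Submodule.subset_span (Or.inl rfl))
    (by
      rw [hS, Submodule.mkQ_apply, Submodule.Quotient.mk_eq_zero]
      exact Submodule.subset_span (Or.inr rfl))
  let E : MonoidAlgebra ℤ G →ₗ[ℤ] M := (MonoidAlgebra.basis G ℤ).constr ℤ D
  have hE : ∀ g, E (o g) = D g := by
    intro g
    have := (MonoidAlgebra.basis G ℤ).constr_basis ℤ D g
    simpa [o] using this
  have hEx : ∀ (r : MonoidAlgebra ℤ G) (g : G), E (r * (o g - 1)) = r • D g := by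
    intro r g
    induction r using ma_ind with
    | h0 h =>
      have : o h * (o g - 1) = o (h * g) - o h := by simp only [o, map_mul]; noncomm_ring
      rw [this, map_sub, hE, hE, hD]; abel
    | hadd x y hx hy => rw [add_mul, map_add, hx, hy, add_smul]
    | hsmul n x hx => rw [smul_mul_assoc, map_smul, hx, smul_assoc]
  have h0 : S.mkQ (a, b) = 0 := by
    rw [← hS, ← Du, ← Dv, ← hEx, ← hEx, ← map_add, hab, map_zero]
  rw [Submodule.mkQ_apply, Submodule.Quotient.mk_eq_zero, Submodule.mem_span_pair] at h0
  obtain ⟨α, β, h⟩ := h0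
  rw [Prod.ext_iff] at h
  exact ⟨α, β, h.1.symm, h.2.symm⟩
end Stmt19

namespace Stmt19
variable {G : Type} [Group G] {k : ℕ} {u v : G}

lemma gs_c3n {R : Type*} [Semiring R] (X : R) (n : ℕ) :
    gs X (n + 3) = gs X 3 + X ^ 3 * gs X n := by
  simp only [gs]
  rw [add_comm n 3, Finset.sum_range_add, Finset.mul_sum]
  simp [pow_add]

lemma gs_swap {R : Type*} [Ring R] (X : R) (n m : ℕ) : (X ^ n - 1) * gs X m = (X ^ m - 1) * gs X n := by
  rw [← gs_mul, ← gs_mul, mul_assoc, mul_gs, mul_assoc, mul_gs]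
  have : Commute (gs X n) (gs X m) := by
    unfold gs
    exact Commute.sum_left _ _ _ fun i _ => Commute.sum_right _ _ _ fun j _ =>
      (Commute.pow_pow (Commute.refl X) i j)
  rw [← mul_gs, ← mul_gs]
  have h2 : Commute (X - 1) (gs X m) := by
    unfold Commute SemiconjBy; rw [gs_mul, mul_gs]
  have h3 : Commute (X - 1) (gs X n) := by
    unfold Commute SemiconjBy; rw [gs_mul, mul_gs]
  rw [← mul_assoc, ← mul_assoc, ← h2.eq, ← h3.eq, mul_assoc, mul_assoc, this.eq]

lemma PData.ocomm (hd : PData G k u v) (x : MonoidAlgebra ℤ G) : o u ^ 3 * x = x * o u ^ 3 := by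
  induction x using ma_ind with
  | h0 g => rw [← o_pow, ← o_mul, ← o_mul, hd.hcomm]
  | hadd x y hx hy => rw [mul_add, add_mul, hx, hy]
  | hsmul n x hx => rw [mul_smul_comm, smul_mul_assoc, hx]

lemma PData.eT_sq (hd : PData G k u v) : o u ^ 3 * (eT k u v * eT k u v) = 1 := by
  rw [eT_eq, ← o_pow, ← o_mul, ← o_mul, ← sq, hd.t_sq, mul_inv_cancel, o_one]

lemma d2d3 (hd : PData G k u v) :
    b1 k u v * a11 k u v + b2 v * a21 u = 0 ∧ b1 k u v * a12 k u v + b2 v * a22 u v = 0 := by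
  have hT := hd.eT_sq
  have hV : o u ^ 3 * o v ^ 3 = 1 := by rw [← o_pow, ← o_pow, ← o_mul, hd.r1, o_one]
  constructor
  · have hTV : o u ^ 3 * (eT k u v * (o v * o u ^ (3 * k + 1))) = 1 := by
      rw [← hT]; rfl
    have hs := gs_swap (o u) 3 (3 * k + 1)
    rw [b1, a11, b2, a21, show 3 * k + 4 = 3 * k + 1 + 3 from rfl, gs_c3n]
    set T := eT k u v
    set V := o v
    set g := gs (o u) (3 * k + 1)
    set g3 := gs (o u) 3
    have e1 : (o u ^ 3 * (T * T)) * (V * (g3 + o u ^ 3 * g)) = V * g3 + o u ^ 3 * V * g := by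
      rw [hT, one_mul, mul_add, ← mul_assoc V (o u ^ 3), ← hd.ocomm V]
    have e2 : o u ^ 3 * T * V * (g3 + (o u ^ 3 - 1) * g) = g3 := by
      rw [hs]
      calc _ = (o u ^ 3 * (T * (V * o u ^ (3 * k + 1)))) * g3 := by noncomm_ring
        _ = g3 := by rw [hTV, one_mul]
    calc _ = o u ^ 3 * V * g + o u ^ 3 * T * V * (g3 + (o u ^ 3 - 1) * g)
          - (o u ^ 3 * (T * T)) * (V * (g3 + o u ^ 3 * g)) + (V - 1) * g3 := by
            simp only [mul_add, add_mul, mul_sub, sub_mul, mul_one, one_mul, mul_assoc]; abel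
      _ = 0 := by rw [e1, e2]; noncomm_ring
  · rw [b1, a12, b2, a22, ← mul_assoc, ← hd.ocomm, mul_assoc (o u ^ 3) _ (gs (o v) 3), mul_gs, mul_sub (o u ^ 3) (o v ^ 3), hV]
    calc _ = o u ^ 3 - o u ^ 3 * (eT k u v * eT k u v) + (1 - o u ^ 3 * 1) := by
            simp only [mul_add, mul_sub, add_mul, sub_mul, mul_one, one_mul, mul_assoc]; abel
      _ = 0 := by rw [hT]; noncomm_ring

/-- The action of `G` on the group ring by right multiplication with inverses. -/
noncomputable def rho (G : Type) [Group G] : G →* AddMonoid.End (MonoidAlgebra ℤ G) where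
  toFun g := AddMonoidHom.mulRight (o g⁻¹)
  map_one' := by
    ext1 x
    change x * o 1⁻¹ = x
    rw [inv_one, o_one, mul_one]
  map_mul' g h := by
    ext1 x
    change x * o (g * h)⁻¹ = x * o h⁻¹ * o g⁻¹
    rw [mul_inv_rev, o_mul, mul_assoc]

lemma rho_apply (g : G) (x : MonoidAlgebra ℤ G) : rho G g x = x * o g⁻¹ := rfl

lemma rho_pow (a : Aff (rho G)) (n : ℕ) : (a ^ n).fst = a.fst * gs (o (a.snd)⁻¹) n := by
  rw [Aff.pow_fst, gs, Finset.mul_sum]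
  refine Finset.sum_congr rfl fun i _ => ?_
  rw [rho_apply, ← inv_pow, o_pow]

lemma inner_of_der [Fintype G] (f : G →* Aff (rho G)) (hf : ∀ g, (f g).snd = g) :
    ∃ m : MonoidAlgebra ℤ G, ∀ h, (f h).fst = m * o h⁻¹ - m := by
  refine ⟨∑ g : G, (f g).fst.coeff 1 • o g, fun h => ?_⟩
  have hm : ∀ x, (∑ g : G, (f g).fst.coeff 1 • o g).coeff x = (f x).fst.coeff 1 := by
    intro x
    classical
    simp only [MonoidAlgebra.coeff_smul, MonoidAlgebra.coeff_sum]
    simp [o, Finsupp.single_apply]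
  generalize (∑ g : G, (f g).fst.coeff 1 • o g) = m at hm
  ext g
  have h1 : (f (g * h)).fst = (f g).fst + (f h).fst * o g⁻¹ := by
    rw [map_mul, Aff.mul_fst, hf, rho_apply]
  have h2 := congrArg (fun x => MonoidAlgebra.coeff x 1) h1
  simp only [MonoidAlgebra.coeff_add, Finsupp.add_apply] at h2
  have h3 : ((f h).fst * o g⁻¹).coeff 1 = (f h).fst.coeff g := by simp [o]
  have h4 : (m * o h⁻¹).coeff g = m.coeff (g * h) := by simp [o]
  rw [MonoidAlgebra.coeff_sub, Finsupp.sub_apply, h4, hm, hm, h2, h3]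
  ring

lemma comm_identity_ring (u : G) (k : ℕ) :
    gs (o u ^ 3) k * (1 + o u⁻¹ + o u⁻¹ ^ 2) - o u⁻¹ ^ (3 * k + 1) * gs (o u) (3 * k + 1) * o u⁻¹ ^ 2 * o u ^ (3 * k)
      + o u⁻¹ ^ 3 = 0 ∧
    gs (o u ^ 3) k * (1 + o u⁻¹ + o u⁻¹ ^ 2) + o u⁻¹ ^ 3 * o u⁻¹ ^ (3 * k + 1) * o u ^ (3 * k) * (1 + o u⁻¹ + o u⁻¹ ^ 2)
      - o u⁻¹ ^ 3 * o u⁻¹ ^ (3 * k + 1) * gs (o u) (3 * k + 4) * o u⁻¹ ^ 2 * o u ^ (3 * k) + o u⁻¹ ^ 3 = 0 := by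
  let ι := MonoidAlgebra.mapDomainRingHom ℤ (zpowersHom G u)
  let c : Multiplicative ℤ := Multiplicative.ofAdd 1
  have h1 : ι (MonoidAlgebra.of ℤ _ c) = o u := by simp [ι, o, c]
  have h2 : ι (MonoidAlgebra.of ℤ _ c⁻¹) = o u⁻¹ := by simp [ι, o, c]
  obtain ⟨e1, e2⟩ := comm_identity (MonoidAlgebra.of ℤ _ c) (MonoidAlgebra.of ℤ _ c⁻¹)
    (by rw [← map_mul, mul_inv_cancel, map_one]) k
  replace e1 := congrArg ι e1
  replace e2 := congrArg ι e2
  simp only [map_add, map_sub, map_mul, map_pow, gs_map, h1, h2, map_one, map_zero] at e1 e2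
  exact ⟨e1, e2⟩

lemma ex2 [Fintype G] (hd : PData G k u v) (α β : MonoidAlgebra ℤ G) :
    (α * a11 k u v + β * a21 u = 0 ∧ α * a12 k u v + β * a22 u v = 0) ↔
    ∃ m, α = m * b1 k u v ∧ β = m * b2 v := by
  constructor
  swap
  · rintro ⟨m, rfl, rfl⟩
    obtain ⟨h1, h2⟩ := d2d3 hd
    exact ⟨by rw [mul_assoc, mul_assoc, ← mul_add, h1, mul_zero],
      by rw [mul_assoc, mul_assoc, ← mul_add, h2, mul_zero]⟩
  rintro ⟨E1, E2⟩
  obtain ⟨t, ht⟩ : ∃ t, t = v * u ^ (3 * k + 1) := ⟨_, rfl⟩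
  have htsq : t ^ 2 = (u ^ 3)⁻¹ := by rw [ht, hd.t_sq]
  have hT : eT k u v = o t := by rw [eT_eq, ht]
  let T : Aff (rho G) := ⟨α * o t, t⟩
  let V : Aff (rho G) := ⟨-(β * o v⁻¹), v⟩
  have hT2 : (T ^ 2).fst = α * (1 + o t) := by
    rw [rho_pow]
    change α * o t * gs (o t⁻¹) 2 = _
    simp only [gs, Finset.sum_range_succ, Finset.sum_range_zero, pow_zero, pow_one, zero_add]
    rw [mul_add, mul_assoc α _ (o t⁻¹), o_mul_inv]; noncomm_ring
  have hT2s : (T ^ 2).snd = (u ^ 3)⁻¹ := by rw [Aff.pow_snd]; exact htsq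
  have hv3 : o v⁻¹ * gs (o v⁻¹) 3 = o u ^ 3 * gs (o v) 3 := by
    have : o u ^ 3 = o v⁻¹ ^ 3 := by
      rw [← o_pow, ← o_pow, inv_pow, hd.t_cube, inv_inv]
    rw [this, gs_three, gs_three]
    have hc := o_inv_mul v
    have e1 : o v⁻¹ ^ 3 * o v = o v⁻¹ ^ 2 := by rw [pow_succ, mul_assoc, hc, mul_one]
    have e2 : o v⁻¹ ^ 3 * o v ^ 2 = o v⁻¹ := by
      rw [pow_succ _ 2, pow_succ _ 1, pow_one, pow_two]
      calc _ = o v⁻¹ * (o v⁻¹ * (o v⁻¹ * o v) * o v) := by noncomm_ring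
        _ = _ := by rw [hc, mul_one, hc, mul_one]
    rw [mul_add (o v⁻¹ ^ 3), mul_add (o v⁻¹ ^ 3), e1, e2]; noncomm_ring
  have h1 : T ^ 2 = V ^ 3 := by
    ext1
    · rw [hT2, rho_pow]
      change _ = -(β * o v⁻¹) * gs (o v⁻¹) 3
      rw [neg_mul, mul_assoc, hv3, eq_neg_iff_add_eq_zero, ← E2, a12, a22, hT]
    · rw [hT2s, Aff.pow_snd]; exact hd.t_cube.symm
  have hW : ((T ^ 2) ^ k * V⁻¹ * T).fst
      = α * (1 + o t) * gs (o u ^ 3) k + (β + α * o t * o v) * o u ^ (3 * k) := by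
    have hVi : (V⁻¹).fst = β := by
      rw [Aff.inv_fst, rho_apply]
      change -(-(β * o v⁻¹) * o v⁻¹⁻¹) = β
      rw [inv_inv, neg_mul, neg_neg, mul_assoc, o_inv_mul, mul_one]
    have hVs : (V⁻¹).snd = v⁻¹ := rfl
    have hk1 : ((T ^ 2) ^ k).fst = α * (1 + o t) * gs (o u ^ 3) k := by
      rw [rho_pow, hT2, hT2s, inv_inv, o_pow]
    have hk2 : ((T ^ 2) ^ k).snd = (u ^ (3 * k))⁻¹ := by
      rw [Aff.pow_snd, hT2s, inv_pow, pow_mul]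
    rw [mul_assoc, Aff.mul_fst, hk1, hk2, rho_apply, inv_inv, Aff.mul_fst, hVi, hVs, rho_apply, inv_inv, o_pow]
  have hWs : ((T ^ 2) ^ k * V⁻¹ * T).snd = u := by
    rw [Aff.mul_snd, Aff.mul_snd, Aff.pow_snd, hT2s]
    change (u ^ 3)⁻¹ ^ k * v⁻¹ * t = u
    rw [ht, inv_pow, ← pow_mul, pow_succ]; group
  have h2 : ((T ^ 2) ^ k * V⁻¹ * T) ^ 3 * T ^ 2 = 1 := by
    ext1
    · rw [Aff.mul_fst, rho_pow, hW, Aff.pow_snd, hWs, hT2, rho_apply, ← inv_pow, o_pow, gs_three, Aff.one_fst]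
      obtain ⟨c1, c2⟩ := comm_identity_ring u k
      have hg : gs (o u) 3 * o u⁻¹ ^ 2 = 1 + o u⁻¹ + o u⁻¹ ^ 2 := by
        rw [gs_three]
        have hc := o_mul_inv u
        have e1 : o u * o u⁻¹ ^ 2 = o u⁻¹ := by rw [pow_two, ← mul_assoc, hc, one_mul]
        have e2 : o u ^ 2 * o u⁻¹ ^ 2 = 1 := by rw [pow_two, mul_assoc, e1, hc]
        rw [add_mul, add_mul, e1, e2]; noncomm_ring
      have hgc : (1 + o u⁻¹ + o u⁻¹ ^ 2) * o u ^ (3 * k) = o u ^ (3 * k) * (1 + o u⁻¹ + o u⁻¹ ^ 2) := by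
        have : Commute (o u ^ 3) (1 + o u⁻¹ + o u⁻¹ ^ 2) := hd.ocomm _
        rw [pow_mul]; exact ((this.pow_left k).eq).symm
      have hVT : o v = o t * o u⁻¹ ^ (3 * k + 1) := by
        rw [← o_pow, ← o_mul, ht, inv_pow, mul_inv_cancel_right]
      have hTT : o t * o t = o u⁻¹ ^ 3 := by
        rw [← o_mul, ← sq, htsq, ← o_pow, inv_pow]
      have E1' : α * (o t * o u⁻¹ ^ (3 * k + 1) * gs (o u) (3 * k + 1)
          + o u⁻¹ ^ 3 * o u⁻¹ ^ (3 * k + 1) * gs (o u) (3 * k + 4)) * (o u⁻¹ ^ 2 * o u ^ (3 * k))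
          + β * (o u ^ (3 * k) * (1 + o u⁻¹ + o u⁻¹ ^ 2)) = 0 := by
        have := congrArg (· * (o u⁻¹ ^ 2 * o u ^ (3 * k))) E1
        simp only [zero_mul] at this
        rw [← this, a11, a21, ← hgc, ← hg, hT, hVT, ← mul_assoc (o t) (o t), hTT]
        noncomm_ring
      have hTV : o t * o v = o u⁻¹ ^ 3 * o u⁻¹ ^ (3 * k + 1) := by rw [hVT, ← mul_assoc, hTT]
      generalize o u⁻¹ ^ 3 * o u⁻¹ ^ (3 * k + 1) = A at *
      generalize o u⁻¹ ^ (3 * k + 1) = B at *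
      generalize 1 + o u⁻¹ + o u⁻¹ ^ 2 = g at *
      generalize o u ^ (3 * k) = H at *
      generalize gs (o u) (3 * k + 1) = S at *
      generalize gs (o u) (3 * k + 4) = S' at *
      generalize gs (o u ^ 3) k = L at *
      generalize o u⁻¹ ^ 3 = Y3 at *
      generalize o u⁻¹ ^ 2 = Y2 at *
      rw [mul_assoc α (o t), hTV]
      have F : α * (L * g + A * H * g - A * S' * Y2 * H + Y3) + α * o t * (L * g - B * S * Y2 * H + Y3) = 0 := by
        rw [c1, c2, mul_zero, mul_zero, add_zero]
      refine Eq.trans ?_ ((congrArg₂ (· + ·) F E1').trans (add_zero 0))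
      simp only [mul_add, add_mul, mul_sub, sub_mul, mul_one, one_mul, mul_assoc]; abel
    · rw [Aff.mul_snd, Aff.pow_snd, hWs, hT2s, Aff.one_snd, mul_inv_cancel]
  obtain ⟨U, hU, r1, r2, r3⟩ := uv_of_tv k h1 h2
  obtain ⟨f, f1, f2, f3⟩ := hd.exists_der (rho G) U V (by rw [hU, hWs]) rfl r1 r2
  obtain ⟨m, hm⟩ := inner_of_der f f1
  have ft : f t = T := by rw [ht, map_mul, map_pow, f2, f3, r3]
  have m1 := hm t
  have m2 := hm v
  rw [ft] at m1
  rw [f3] at m2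
  change α * o t = m * o t⁻¹ - m at m1
  change -(β * o v⁻¹) = m * o v⁻¹ - m at m2
  refine ⟨m, ?_, ?_⟩
  · have e := congrArg (· * o t⁻¹) m1
    simp only [mul_assoc, o_mul_inv, mul_one, sub_mul] at e
    have h5 : o t⁻¹ * o t⁻¹ = o u ^ 3 := by
      rw [← o_mul, ← mul_inv_rev, ← sq, htsq, inv_inv, o_pow]
    rw [e, h5, b1, hT, ← h5, mul_sub (o t⁻¹ * o t⁻¹), mul_assoc (o t⁻¹) _ (o t), o_inv_mul]; noncomm_ring
  · have e := congrArg (· * o v) m2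
    simp only [mul_assoc, neg_mul, o_inv_mul, mul_one, sub_mul] at e
    rw [neg_eq_iff_eq_neg] at e
    rw [e, b2]; noncomm_ring
end Stmt19

namespace Stmt19

/-- The linear map given by right multiplication with a matrix. -/
def Dmap {R : Type} [Ring R] (E : ℕ → ℕ → R) (n m : ℕ) : (Fin n → R) →ₗ[R] (Fin m → R) where
  toFun x j := ∑ i, x i * E i j
  map_add' x y := by
    funext j
    simp [add_mul, Finset.sum_add_distrib]
  map_smul' r x := by
    funext j
    simp [mul_assoc, Finset.mul_sum]

lemma Dmap_apply {R : Type} [Ring R] (E : ℕ → ℕ → R) (n m : ℕ) (x : Fin n → R) (j : Fin m) :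
    Dmap E n m x j = ∑ i, x i * E i j := rfl

variable {G : Type} [Group G] {k : ℕ} {u v : G}

/-- The matrices of the periodic resolution. -/
noncomputable def Ent [Fintype G] (k : ℕ) (u v : G) (h : ℕ) : ℕ → ℕ → MonoidAlgebra ℤ G :=
  if h % 4 = 0 then fun i _ => if i = 0 then o u - 1 else o v - 1
  else if h % 4 = 1 then fun i j => if i = 0 then (if j = 0 then a11 k u v else a12 k u v)
    else (if j = 0 then a21 u else a22 u v)
  else if h % 4 = 2 then fun _ j => if j = 0 then b1 k u v else b2 v
  else fun _ _ => ∑ g : G, o g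

lemma Ent_0 [Fintype G] (h : ℕ) (hh : h % 4 = 0) :
    Ent k u v h = fun i _ => if i = 0 then o u - 1 else o v - 1 := by simp only [Ent, hh, if_true]
lemma Ent_1 [Fintype G] (h : ℕ) (hh : h % 4 = 1) :
    Ent k u v h = fun i j => if i = 0 then (if j = 0 then a11 k u v else a12 k u v)
    else (if j = 0 then a21 u else a22 u v) := by
  rw [Ent, if_neg (by omega), if_pos hh]
lemma Ent_2 [Fintype G] (h : ℕ) (hh : h % 4 = 2) :
    Ent k u v h = fun _ j => if j = 0 then b1 k u v else b2 v := by
  rw [Ent, if_neg (by omega), if_neg (by omega), if_pos hh]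
lemma Ent_3 [Fintype G] (h : ℕ) (hh : h % 4 = 3) :
    Ent k u v h = fun _ _ => ∑ g : G, o g := by
  rw [Ent, if_neg (by omega), if_neg (by omega), if_neg (by omega)]

/-- The differentials of the periodic resolution. -/
noncomputable def dd [Fintype G] (k : ℕ) (u v : G) (h : ℕ) :
    (Fin (minRank (h + 1)) → MonoidAlgebra ℤ G) →ₗ[MonoidAlgebra ℤ G] (Fin (minRank h) → MonoidAlgebra ℤ G) :=
  Dmap (Ent k u v h) (minRank (h + 1)) (minRank h)

/-- The augmentation on free modules. -/
noncomputable def eps (G : Type) [Group G] (n : ℕ) : (Fin n → MonoidAlgebra ℤ G) →ₗ[ℤ] ℤ where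
  toFun x := ∑ i, aug G (x i)
  map_add' x y := by simp [Finset.sum_add_distrib]
  map_smul' r x := by simp [Finset.mul_sum]

lemma minRank_a (h : ℕ) (hh : h % 4 = 0 ∨ h % 4 = 3) : minRank h = 1 := if_pos hh
lemma minRank_b (h : ℕ) (hh : h % 4 = 1 ∨ h % 4 = 2) : minRank h = 2 := if_neg (by omega)

lemma eps_smul (n : ℕ) (g : G) (x : Fin n → MonoidAlgebra ℤ G) : eps G n (o g • x) = eps G n x := by
  change ∑ i, aug G (o g * x i) = ∑ i, aug G (x i)
  simp only [map_mul, aug_o, one_mul]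

lemma eps_surj : Function.Surjective (eps G (minRank 0)) := by
  rw [minRank_a 0 (by omega)]
  intro n
  refine ⟨fun _ => (n : MonoidAlgebra ℤ G), ?_⟩
  change ∑ i : Fin 1, aug G (n : MonoidAlgebra ℤ G) = n
  simp

lemma dd_eps_exact [Fintype G] (hd : PData G k u v) :
    Function.Exact (dd k u v 0) (eps G (minRank 0)) := by
  unfold dd
  rw [minRank_a 0 (by omega), minRank_b (0 + 1) (by omega), Ent_0 0 rfl]
  intro x
  have h1 : eps G 1 x = aug G (x 0) := by
    change ∑ i : Fin 1, aug G (x i) = _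
    rw [Fin.sum_univ_one]
  rw [h1, ex0 hd]
  constructor
  · rintro ⟨a, b, e⟩
    refine ⟨![a, b], ?_⟩
    funext j
    rw [Dmap_apply, Fin.sum_univ_two, Subsingleton.elim j 0, e]
    simp
  · rintro ⟨y, rfl⟩
    refine ⟨y 0, y 1, ?_⟩
    rw [Dmap_apply, Fin.sum_univ_two]
    simp

lemma dd_exact [Fintype G] (hd : PData G k u v) (h : ℕ) :
    Function.Exact (dd k u v (h + 1)) (dd k u v h) := by
  unfold dd
  have h4 : h % 4 = 0 ∨ h % 4 = 1 ∨ h % 4 = 2 ∨ h % 4 = 3 := by omega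
  rcases h4 with hh | hh | hh | hh
  · rw [minRank_a h (by omega), minRank_b (h + 1) (by omega), minRank_b (h + 1 + 1) (by omega),
      Ent_0 h hh, Ent_1 (h + 1) (by omega)]
    intro x
    rw [funext_iff, Fin.forall_fin_one, Dmap_apply, Fin.sum_univ_two]
    refine Iff.trans (?_ : _ ↔ x 0 * (o u - 1) + x 1 * (o v - 1) = 0) ((ex1 hd (x 0) (x 1)).trans ?_)
    · simp
    constructor
    · rintro ⟨a, b, e⟩
      refine ⟨![a, b], ?_⟩
      rw [funext_iff, Fin.forall_fin_two, Dmap_apply, Dmap_apply, Fin.sum_univ_two, Fin.sum_univ_two, e.1, e.2]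
      simp
    · rintro ⟨y, rfl⟩
      refine ⟨y 0, y 1, ?_⟩
      rw [Dmap_apply, Dmap_apply, Fin.sum_univ_two, Fin.sum_univ_two]
      simp
  · rw [minRank_b h (by omega), minRank_b (h + 1) (by omega), minRank_a (h + 1 + 1) (by omega),
      Ent_1 h hh, Ent_2 (h + 1) (by omega)]
    intro x
    rw [funext_iff, Fin.forall_fin_two, Dmap_apply, Dmap_apply, Fin.sum_univ_two, Fin.sum_univ_two]
    refine Iff.trans (?_ : _ ↔ (x 0 * a11 k u v + x 1 * a21 u = 0 ∧ x 0 * a12 k u v + x 1 * a22 u v = 0))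
      ((ex2 hd (x 0) (x 1)).trans ?_)
    · simp
    constructor
    · rintro ⟨m, e⟩
      refine ⟨![m], ?_⟩
      rw [funext_iff, Fin.forall_fin_two, Dmap_apply, Dmap_apply, Fin.sum_univ_one, Fin.sum_univ_one, e.1, e.2]
      simp
    · rintro ⟨y, rfl⟩
      refine ⟨y 0, ?_⟩
      rw [Dmap_apply, Dmap_apply, Fin.sum_univ_one, Fin.sum_univ_one]
      simp
  · rw [minRank_b h (by omega), minRank_a (h + 1) (by omega), minRank_a (h + 1 + 1) (by omega),
      Ent_2 h hh, Ent_3 (h + 1) (by omega)]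
    intro x
    rw [funext_iff, Fin.forall_fin_two, Dmap_apply, Dmap_apply, Fin.sum_univ_one, Fin.sum_univ_one]
    refine Iff.trans (?_ : _ ↔ (x 0 * b1 k u v = 0 ∧ x 0 * b2 v = 0))
      ((ex3 hd (x 0)).trans ?_)
    · simp
    constructor
    · rintro ⟨m, e⟩
      refine ⟨![m], ?_⟩
      rw [funext_iff, Fin.forall_fin_one, Dmap_apply, Fin.sum_univ_one, e]
      simp
    · rintro ⟨y, rfl⟩
      refine ⟨y 0, ?_⟩
      rw [Dmap_apply, Fin.sum_univ_one]
  · rw [minRank_a h (by omega), minRank_a (h + 1) (by omega), minRank_b (h + 1 + 1) (by omega),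
      Ent_3 h hh, Ent_0 (h + 1) (by omega)]
    intro x
    rw [funext_iff, Fin.forall_fin_one, Dmap_apply, Fin.sum_univ_one]
    refine (ex4 hd (x 0)).trans ?_
    constructor
    · rintro ⟨a, b, e⟩
      refine ⟨![a, b], ?_⟩
      rw [funext_iff, Fin.forall_fin_one, Dmap_apply, Fin.sum_univ_two, e]
      simp
    · rintro ⟨y, rfl⟩
      refine ⟨y 0, y 1, ?_⟩
      rw [Dmap_apply, Fin.sum_univ_two]
      simp
end Stmt19

namespace Stmt19

section schanuel
variable {R : Type} [Ring R]

/-- Schanuel's lemma. -/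
lemma schanuel {P Q A B : Type} [AddCommGroup P] [AddCommGroup Q] [AddCommGroup A] [AddCommGroup B]
    [Module R P] [Module R Q] [Module R A] [Module R B] [Module.Projective R P] [Module.Projective R Q]
    (f : P →ₗ[R] A) (g : Q →ₗ[R] B) (hf : Function.Surjective f) (hg : Function.Surjective g)
    (e : A ≃ₗ[R] B) :
    Nonempty ((LinearMap.ker f × Q) ≃ₗ[R] (LinearMap.ker g × P)) := by
  obtain ⟨s, hs⟩ := Module.projective_lifting_property g (e.toLinearMap.comp f) hg
  obtain ⟨t, ht⟩ := Module.projective_lifting_property f (e.symm.toLinearMap.comp g) hf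
  have hs' : ∀ p, g (s p) = e (f p) := fun p => LinearMap.congr_fun hs p
  have ht' : ∀ q, f (t q) = e.symm (g q) := fun q => LinearMap.congr_fun ht q
  refine ⟨{
    toFun := fun z => (⟨z.2 - s (z.1.1 + t z.2), ?_⟩, z.1.1 + t z.2)
    invFun := fun z => (⟨z.2 - t (z.1.1 + s z.2), ?_⟩, z.1.1 + s z.2)
    map_add' := ?_
    map_smul' := ?_
    left_inv := ?_
    right_inv := ?_ }⟩
  · rw [LinearMap.mem_ker, map_sub, hs', map_add, ht', LinearMap.mem_ker.1 z.1.2]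
    simp
  · intro x y
    ext
    · simp only [Prod.fst_add, Prod.snd_add, Submodule.coe_add, map_add]; abel
    · simp only [Prod.fst_add, Prod.snd_add, Submodule.coe_add, map_add]; abel
  · intro r x
    ext
    · simp [smul_sub]
    · simp
  · rw [LinearMap.mem_ker, map_sub, ht', map_add, hs', LinearMap.mem_ker.1 z.1.2]
    simp
  · intro x
    ext <;> simp
  · intro x
    ext <;> simp

lemma ker_equiv {F2 F1 F0 L : Type} [AddCommGroup F2] [AddCommGroup F1] [AddCommGroup F0] [AddCommGroup L]
    [Module R F2] [Module R F1] [Module R F0] [Module R L] (d1 : F2 →ₗ[R] F1) (d0 : F1 →ₗ[R] F0)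
    (h : Function.Exact d1 d0) :
    Nonempty ((F1 ⧸ LinearMap.range d1) ≃ₗ[R]
      LinearMap.ker ((LinearMap.range d0).mkQ.prodMap (LinearMap.id : L →ₗ[R] L))) := by
  let ψ : F1 →ₗ[R] LinearMap.ker ((LinearMap.range d0).mkQ.prodMap (LinearMap.id : L →ₗ[R] L)) :=
    LinearMap.codRestrict _ ((LinearMap.inl R F0 L).comp d0) (by
      intro x
      rw [LinearMap.mem_ker]
      simp)
  have hψ : Function.Surjective ψ := by
    rintro ⟨⟨x, y⟩, hx⟩
    rw [LinearMap.mem_ker] at hx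
    simp only [LinearMap.prodMap_apply, Prod.mk_eq_zero, LinearMap.id_apply,
      Submodule.mkQ_apply, Submodule.Quotient.mk_eq_zero] at hx
    obtain ⟨⟨z, rfl⟩, rfl⟩ := hx
    exact ⟨z, rfl⟩
  have hk : LinearMap.range d1 = LinearMap.ker ψ := by
    ext x
    rw [LinearMap.mem_range, LinearMap.mem_ker]
    rw [show (∃ y, d1 y = x) ↔ d0 x = 0 from (h x).symm]
    constructor
    · intro hx
      apply Subtype.ext
      change ((d0 x, 0) : F0 × L) = 0
      rw [hx]; rfl
    · intro hx
      have := congrArg (fun z => z.1.1) hx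
      exact this
  exact ⟨(Submodule.quotEquivOfEq _ _ hk).trans (ψ.quotKerEquivOfSurjective hψ)⟩

lemma fin_equiv (R : Type) [Ring R] (m n : ℕ) : Nonempty (((Fin m → R) × (Fin n → R)) ≃ₗ[R] (Fin (m + n) → R)) :=
  ⟨(LinearEquiv.sumArrowLequivProdArrow (Fin m) (Fin n) R R).symm.trans
    (LinearEquiv.funCongrLeft R R finSumFinEquiv.symm)⟩

lemma dim_le {K : Type} [Field K] (φ : R →+* K) {P W ι : Type} [AddCommGroup P] [Module R P]
    [AddCommGroup W] [Module K W] [Fintype ι] (B : Module.Basis ι R P) (Θ : P →ₛₗ[φ] W)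
    (h : Submodule.span K (Set.range Θ) = ⊤) : Module.finrank K W ≤ Fintype.card ι := by
  have : Submodule.span K (Set.range fun i => Θ (B i)) = ⊤ := by
    rw [eq_top_iff, ← h, Submodule.span_le]
    rintro _ ⟨x, rfl⟩
    rw [← B.sum_repr x, map_sum]
    refine Submodule.sum_mem _ fun i _ => ?_
    rw [map_smulₛₗ]
    exact Submodule.smul_mem _ _ (Submodule.subset_span ⟨i, rfl⟩)
  rw [← finrank_top, ← this]
  exact finrank_range_le_card _

/-- Base change on coordinates. -/
def coordMap {K : Type} [Field K] (φ : R →+* K) (n : ℕ) : (Fin n → R) →ₛₗ[φ] (Fin n → K) where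
  toFun x i := φ (x i)
  map_add' x y := by funext i; simp
  map_smul' r x := by funext i; simp

lemma coordMap_apply {K : Type} [Field K] (φ : R →+* K) (n : ℕ) (x : Fin n → R) (i : Fin n) :
    coordMap φ n x i = φ (x i) := rfl

lemma rank_ineq {K : Type} [Field K] (φ : R →+* K) (E : ℕ → ℕ → R) (hE : ∀ i j, φ (E i j) = 0)
    (f f1 f' f1' a b : ℕ) (d : (Fin f1 → R) →ₗ[R] (Fin f → R))
    (e : (((Fin f → R) ⧸ LinearMap.range d) × (Fin a → R)) ≃ₗ[R]
      (((Fin f' → R) ⧸ LinearMap.range (Dmap E f1' f')) × (Fin b → R))) : f' + b ≤ f + a := by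
  let ψ1 : ((Fin f' → R) ⧸ LinearMap.range (Dmap E f1' f')) →ₛₗ[φ] (Fin f' → K) :=
    (LinearMap.range (Dmap E f1' f')).liftQ (coordMap φ f') (by
      rintro _ ⟨x, rfl⟩
      rw [LinearMap.mem_ker]
      funext j
      rw [coordMap_apply, Dmap_apply]
      simp [hE])
  let Ψ : (((Fin f' → R) ⧸ LinearMap.range (Dmap E f1' f')) × (Fin b → R)) →ₛₗ[φ]
      ((Fin f' → K) × (Fin b → K)) :=
    { toFun := fun z => (ψ1 z.1, coordMap φ b z.2)
      map_add' := fun x y => by simp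
      map_smul' := fun r x => by simp }
  have hΨ : ∀ x y, Ψ ((LinearMap.range (Dmap E f1' f')).mkQ x, y) = (coordMap φ f' x, coordMap φ b y) :=
    fun x y => rfl
  let π : ((Fin f → R) × (Fin a → R)) →ₗ[R] _ :=
    e.toLinearMap.comp ((LinearMap.range d).mkQ.prodMap (LinearMap.id : (Fin a → R) →ₗ[R] (Fin a → R)))
  have hπ : Function.Surjective π := by
    refine e.surjective.comp ?_
    rintro ⟨x, y⟩
    obtain ⟨z, rfl⟩ := (LinearMap.range d).mkQ_surjective x
    exact ⟨(z, y), rfl⟩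
  have key := dim_le φ ((Pi.basisFun R (Fin f)).prod (Pi.basisFun R (Fin a))) (Ψ.comp π) (by
    rw [eq_top_iff, ← ((Pi.basisFun K (Fin f')).prod (Pi.basisFun K (Fin b))).span_eq, Submodule.span_le]
    rintro _ ⟨i, rfl⟩
    apply Submodule.subset_span
    obtain ⟨x, y, hxy⟩ : ∃ x y, (coordMap φ f' x, coordMap φ b y) =
        ((Pi.basisFun K (Fin f')).prod (Pi.basisFun K (Fin b))) i := by
      rcases i with i | i
      · refine ⟨Pi.single i 1, 0, ?_⟩
        ext j
        · simp [coordMap_apply, Pi.single_apply, apply_ite φ]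
        · simp
      · refine ⟨0, Pi.single i 1, ?_⟩
        ext j
        · simp
        · simp [coordMap_apply, Pi.single_apply, apply_ite φ]
    obtain ⟨w, hw⟩ := hπ ((LinearMap.range (Dmap E f1' f')).mkQ x, y)
    refine ⟨w, ?_⟩
    change Ψ (π w) = _
    rw [hw, hΨ, hxy])
  simpa using key

lemma min_abstract {K : Type} [Field K] (f f' : ℕ → ℕ)
    (d : (h : ℕ) → (Fin (f (h + 1)) → R) →ₗ[R] (Fin (f h) → R))
    (E : ℕ → ℕ → ℕ → R)
    (hd : ∀ h, Function.Exact (d (h + 1)) (d h))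
    (hd' : ∀ h, Function.Exact (Dmap (E (h + 1)) (f' (h + 1 + 1)) (f' (h + 1)))
      (Dmap (E h) (f' (h + 1)) (f' h)))
    (hφ : ∀ h, ∃ φ : R →+* K, ∀ i j, φ (E h i j) = 0)
    (e0 : Nonempty (((Fin (f 0) → R) ⧸ LinearMap.range (d 0)) ≃ₗ[R]
      ((Fin (f' 0) → R) ⧸ LinearMap.range (Dmap (E 0) (f' (0 + 1)) (f' 0))))) (n : ℕ) :
    f' n ≤ f n := by
  have main : ∀ n, ∃ a b, a ≤ b ∧ Nonempty ((((Fin (f n) → R) ⧸ LinearMap.range (d n)) × (Fin a → R)) ≃ₗ[R]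
      (((Fin (f' n) → R) ⧸ LinearMap.range (Dmap (E n) (f' (n + 1)) (f' n))) × (Fin b → R))) := by
    intro n
    induction n with
    | zero =>
      obtain ⟨e⟩ := e0
      exact ⟨0, 0, le_rfl, ⟨e.prodCongr (LinearEquiv.refl R _)⟩⟩
    | succ n ih =>
      obtain ⟨a, b, hab, ⟨e⟩⟩ := ih
      obtain ⟨φ, hφn⟩ := hφ n
      have hr := rank_ineq φ (E n) hφn _ _ _ _ _ _ _ e
      refine ⟨f' n + b, f n + a, hr, ?_⟩
      obtain ⟨s⟩ := schanuel
        ((LinearMap.range (d n)).mkQ.prodMap (LinearMap.id : (Fin a → R) →ₗ[R] (Fin a → R)))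
        ((LinearMap.range (Dmap (E n) (f' (n + 1)) (f' n))).mkQ.prodMap
          (LinearMap.id : (Fin b → R) →ₗ[R] (Fin b → R)))
        (Function.Surjective.prodMap (Submodule.mkQ_surjective _) Function.surjective_id)
        (Function.Surjective.prodMap (Submodule.mkQ_surjective _) Function.surjective_id) e
      obtain ⟨k1⟩ := ker_equiv (L := Fin a → R) _ _ (hd n)
      obtain ⟨k2⟩ := ker_equiv (L := Fin b → R) _ _ (hd' n)
      obtain ⟨p1⟩ := fin_equiv R (f n) a
      obtain ⟨p2⟩ := fin_equiv R (f' n) b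
      exact ⟨(k1.prodCongr p2.symm).trans (s.trans (k2.symm.prodCongr p1))⟩
  obtain ⟨a, b, hab, ⟨e⟩⟩ := main n
  obtain ⟨φ, hφn⟩ := hφ n
  have hr := rank_ineq φ (E n) hφn _ _ _ _ _ _ _ e
  omega
end schanuel

variable {G : Type} [Group G] {k : ℕ} {u v : G}

lemma base_equiv {n m n' m' : ℕ} (d : (Fin n → MonoidAlgebra ℤ G) →ₗ[MonoidAlgebra ℤ G] (Fin m → MonoidAlgebra ℤ G))
    (d' : (Fin n' → MonoidAlgebra ℤ G) →ₗ[MonoidAlgebra ℤ G] (Fin m' → MonoidAlgebra ℤ G))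
    (ε : (Fin m → MonoidAlgebra ℤ G) →ₗ[ℤ] ℤ) (ε' : (Fin m' → MonoidAlgebra ℤ G) →ₗ[ℤ] ℤ)
    (h1 : ∀ (g : G) x, ε (o g • x) = ε x) (h1' : ∀ (g : G) x, ε' (o g • x) = ε' x)
    (h2 : Function.Surjective ε) (h2' : Function.Surjective ε')
    (h3 : Function.Exact d ε) (h3' : Function.Exact d' ε') :
    Nonempty (((Fin m → MonoidAlgebra ℤ G) ⧸ LinearMap.range d) ≃ₗ[MonoidAlgebra ℤ G]
      ((Fin m' → MonoidAlgebra ℤ G) ⧸ LinearMap.range d')) := by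
  letI : Module (MonoidAlgebra ℤ G) ℤ := Module.compHom ℤ (aug G : MonoidAlgebra ℤ G →+* ℤ)
  have hsm : ∀ (r : MonoidAlgebra ℤ G) (n : ℤ), r • n = aug G r * n := fun r n => rfl
  have key : ∀ {n m : ℕ} (d : (Fin n → MonoidAlgebra ℤ G) →ₗ[MonoidAlgebra ℤ G] (Fin m → MonoidAlgebra ℤ G))
      (ε : (Fin m → MonoidAlgebra ℤ G) →ₗ[ℤ] ℤ), (∀ (g : G) x, ε (o g • x) = ε x) →
      Function.Surjective ε → Function.Exact d ε →
      Nonempty (((Fin m → MonoidAlgebra ℤ G) ⧸ LinearMap.range d) ≃ₗ[MonoidAlgebra ℤ G] ℤ) := by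
    intro n m d ε h1 h2 h3
    let E : (Fin m → MonoidAlgebra ℤ G) →ₗ[MonoidAlgebra ℤ G] ℤ :=
      { toFun := ε
        map_add' := map_add ε
        map_smul' := by
          intro r x
          rw [RingHom.id_apply, hsm]
          induction r using ma_ind with
          | h0 g => rw [h1, aug_o, one_mul]
          | hadd r s hr hs => rw [add_smul, map_add, hr, hs, map_add, add_mul]
          | hsmul n r hr =>
            rw [smul_assoc, map_smul, hr, map_smul, smul_eq_mul, smul_eq_mul, mul_assoc] }
    have hk : LinearMap.range d = LinearMap.ker E := by
      ext x
      rw [LinearMap.mem_ker]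
      exact (h3 x).symm
    exact ⟨(Submodule.quotEquivOfEq _ _ hk).trans (E.quotKerEquivOfSurjective h2)⟩
  obtain ⟨e⟩ := key d ε h1 h2 h3
  obtain ⟨e'⟩ := key d' ε' h1' h2' h3'
  exact ⟨e.trans e'.symm⟩

/-- A field of characteristic two with cube roots of unity. -/
abbrev KK : Type := AlgebraicClosure (ZMod 2)

lemma two_KK : (2 : KK) = 0 := CharTwo.two_eq_zero

lemma exists_omega : ∃ w : KK, 1 + w + w ^ 2 = 0 := by
  obtain ⟨w, hw⟩ := IsAlgClosed.exists_root (Polynomial.C 1 * Polynomial.X ^ 2 + Polynomial.C 1 * Polynomial.X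
    + Polynomial.C 1 : Polynomial KK) (by
      rw [Polynomial.degree_quadratic one_ne_zero]; decide)
  refine ⟨w, ?_⟩
  simp only [Polynomial.IsRoot.def, Polynomial.eval_add, Polynomial.eval_mul, Polynomial.eval_C,
    Polynomial.eval_pow, Polynomial.eval_X] at hw
  linear_combination hw

lemma exists_char (hd : PData G k u v) (w : KK) (hw : w ^ 3 = 1) :
    ∃ φ : MonoidAlgebra ℤ G →+* KK, φ (o u) = w ∧ φ (o v) = w ^ 2 := by
  have h0 : w ≠ 0 := by
    rintro rfl
    simp at hw
  let x : KKˣ := Units.mk0 w h0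
  have hx : x ^ 3 = 1 := by
    ext; simp [x, hw]
  obtain ⟨χ, cu, cv⟩ := hd.univ KKˣ x (x ^ 2) (by rw [← pow_mul, mul_comm 2 3, pow_mul, hx, one_pow, one_mul])
    (by
      have : x ^ 2 * x ^ (3 * k + 1) * x ^ 2 * x ^ (3 * k + 4) = (x ^ 3) ^ (2 * k + 3) := by
        rw [← pow_add, ← pow_add, ← pow_add, ← pow_mul]; congr 1; ring
      rw [this, hx, one_pow])
  refine ⟨(MonoidAlgebra.lift ℤ KK G ((Units.coeHom KK).comp χ)).toRingHom, ?_, ?_⟩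
  · have : MonoidAlgebra.lift ℤ KK G ((Units.coeHom KK).comp χ) (o u) = χ u := MonoidAlgebra.lift_of _ _
    exact this.trans (by rw [cu]; rfl)
  · have : MonoidAlgebra.lift ℤ KK G ((Units.coeHom KK).comp χ) (o v) = χ v := MonoidAlgebra.lift_of _ _
    exact this.trans (by rw [cv]; rfl)

lemma exists_kill [Fintype G] (hd : PData G k u v) (h2 : 2 ∣ Nat.card G) (n : ℕ) :
    ∃ φ : MonoidAlgebra ℤ G →+* KK, ∀ i j, φ (Ent k u v n i j) = 0 := by
  have h4 : n % 4 = 0 ∨ n % 4 = 1 ∨ n % 4 = 2 ∨ n % 4 = 3 := by omega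
  have two := two_KK
  rcases h4 with hh | hh | hh | hh
  · obtain ⟨φ, fu, fv⟩ := exists_char hd 1 (one_pow 3)
    refine ⟨φ, fun i j => ?_⟩
    rw [Ent_0 n hh]
    simp only
    split_ifs
    · rw [map_sub, fu, map_one, sub_self]
    · rw [map_sub, fv, map_one]; simp
  · obtain ⟨w, hw⟩ := exists_omega
    have hw3 : w ^ 3 = 1 := by linear_combination (w - 1) * hw
    obtain ⟨φ, fu, fv⟩ := exists_char hd w hw3
    have hp : ∀ k, w ^ (3 * k) = 1 := fun k => by rw [pow_mul, hw3, one_pow]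
    have hg : ∀ k, gs w (3 * k + 1) = 1 := fun k => by rw [gs_c, hw, hp]; ring
    have hT : φ (eT k u v) = 1 := by
      rw [eT, map_mul, map_pow, fu, fv, pow_succ _ (3 * k), hp]; linear_combination hw3
    refine ⟨φ, fun i j => ?_⟩
    rw [Ent_1 n hh]
    simp only
    split_ifs
    · rw [a11, map_add, map_mul, map_mul, map_mul, hT, gs_map, gs_map, fu, fv,
        show 3 * k + 4 = 3 * (k + 1) + 1 by ring, hg, hg]
      linear_combination w ^ 2 * two
    · rw [a12, map_add, map_one, hT]; linear_combination two
    · rw [a21, gs_map, fu, gs_three, hw]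
    · rw [a22, map_mul, gs_map, fv, gs_three]
      have : 1 + w ^ 2 + (w ^ 2) ^ 2 = 0 := by linear_combination hw + w * hw3
      rw [this, mul_zero]
  · obtain ⟨φ, fu, fv⟩ := exists_char hd 1 (one_pow 3)
    refine ⟨φ, fun i j => ?_⟩
    rw [Ent_2 n hh]
    simp only
    split_ifs
    · rw [b1, eT]; simp only [map_mul, map_sub, map_pow, map_one, fu, fv]; simp
    · rw [b2, map_sub, fv, map_one]; simp
  · let φ := (Int.castRingHom KK).comp (aug G).toRingHom
    refine ⟨φ, fun i j => ?_⟩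
    rw [Ent_3 n hh, map_sum]
    have : ∀ g : G, φ (o g) = 1 := fun g => by
      change ((aug G (o g) : ℤ) : KK) = 1
      rw [aug_o, Int.cast_one]
    simp only [this]
    rw [Finset.sum_const, Finset.card_univ, ← Nat.card_eq_fintype_card]
    obtain ⟨c, hc⟩ := h2
    rw [hc]
    simp [two]

lemma minimal [Fintype G] (hd : PData G k u v) (h2 : 2 ∣ Nat.card G) (f : ℕ → ℕ)
    (d : (h : ℕ) → (Fin (f (h + 1)) → MonoidAlgebra ℤ G) →ₗ[MonoidAlgebra ℤ G] (Fin (f h) → MonoidAlgebra ℤ G))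
    (ε : (Fin (f 0) → MonoidAlgebra ℤ G) →ₗ[ℤ] ℤ)
    (h1 : ∀ (g : G) x, ε (o g • x) = ε x) (hs : Function.Surjective ε)
    (h3 : Function.Exact (d 0) ε) (h4 : ∀ h, Function.Exact (d (h + 1)) (d h)) (h : ℕ) :
    minRank h ≤ f h :=
  min_abstract f minRank d (Ent k u v) h4 (dd_exact hd) (exists_kill hd h2)
    (base_equiv (d 0) (dd k u v 0) ε (eps G _) h1 (eps_smul _) hs eps_surj h3 (dd_eps_exact hd)) h
end Stmt19

/-- the generalized binary tetrahedral group `G = P'_{8·3^s}` contains a copy of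
`Q₈`, it admits a free resolution of `ℤ` over `ℤ[G]` with ranks `1, 2, 2, 1, 1, 2, 2, 1, …`,
and these ranks are minimal among all free resolutions of `ℤ` over `ℤ[G]`.  A resolution is
encoded by `ℤ[G]`-linear maps `d h : ℤ[G]^{f(h+1)} → ℤ[G]^{f h}` together with a surjective
`ℤ`-linear, `G`-equivariant augmentation `ε : ℤ[G]^{f 0} → ℤ` (with trivial `G`-action on
`ℤ`), the sequence being exact everywhere. -/
theorem stmt19 (s : ℕ) (hs : 2 ≤ s) :
    (∃ H : Subgroup (PresentedGroup (rels s)), Nonempty (H ≃* QuaternionGroup 2)) ∧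
    (∃ (d : (h : ℕ) → (Fin (minRank (h + 1)) → MonoidAlgebra ℤ (PresentedGroup (rels s)))
        →ₗ[MonoidAlgebra ℤ (PresentedGroup (rels s))]
          (Fin (minRank h) → MonoidAlgebra ℤ (PresentedGroup (rels s))))
      (ε : (Fin (minRank 0) → MonoidAlgebra ℤ (PresentedGroup (rels s))) →ₗ[ℤ] ℤ),
      (∀ (g : PresentedGroup (rels s))
          (x : Fin (minRank 0) → MonoidAlgebra ℤ (PresentedGroup (rels s))),
        ε (MonoidAlgebra.of ℤ (PresentedGroup (rels s)) g • x) = ε x) ∧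
      Function.Surjective ε ∧ Function.Exact (d 0) ε ∧
      (∀ h : ℕ, Function.Exact (d (h + 1)) (d h))) ∧
    (∀ (f : ℕ → ℕ)
      (d : (h : ℕ) → (Fin (f (h + 1)) → MonoidAlgebra ℤ (PresentedGroup (rels s)))
        →ₗ[MonoidAlgebra ℤ (PresentedGroup (rels s))]
          (Fin (f h) → MonoidAlgebra ℤ (PresentedGroup (rels s))))
      (ε : (Fin (f 0) → MonoidAlgebra ℤ (PresentedGroup (rels s))) →ₗ[ℤ] ℤ),
      (∀ (g : PresentedGroup (rels s))
          (x : Fin (f 0) → MonoidAlgebra ℤ (PresentedGroup (rels s))),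
        ε (MonoidAlgebra.of ℤ (PresentedGroup (rels s)) g • x) = ε x) →
      Function.Surjective ε → Function.Exact (d 0) ε →
      (∀ h : ℕ, Function.Exact (d (h + 1)) (d h)) →
      ∀ h : ℕ, minRank h ≤ f h) := by
  obtain ⟨k, hk⟩ : ∃ k, 3 ^ s = 9 * (2 * k + 1) := by
    obtain ⟨j, rfl⟩ := Nat.exists_eq_add_of_le hs
    obtain ⟨k, hk⟩ : Odd (3 ^ j) := Odd.pow (by decide)
    exact ⟨k, by rw [pow_add, hk]; norm_num⟩
  have hd := Stmt19.pdata s k hk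
  haveI := Stmt19.gfinite s
  letI : Fintype (PresentedGroup (rels s)) := Fintype.ofFinite _
  refine ⟨Stmt19.exists_quat_subgroup s (by omega), ?_, ?_⟩
  · exact ⟨Stmt19.dd k _ _, Stmt19.eps _ _, Stmt19.eps_smul _, Stmt19.eps_surj,
      Stmt19.dd_eps_exact hd, Stmt19.dd_exact hd⟩
  · intro f d ε h1 h2 h3 h4 h
    exact Stmt19.minimal hd (Stmt19.two_dvd_card s (by omega)) f d ε h1 h2 h3 h4 h
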